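/- Let d ≥ 1, p = 2, s ∈ (0,1), and let 1 ≤ k ≤ d be an integer. Assume α, β ∈ ℝ satisfy α, β, α+β ∈ (−k, 2s). Then for every u ∈ C_c^1(ℝ^d) when 2s < k+α+β, and for every u ∈ C_c^1(ℝ^d \ K) when 2s > k+α+β, setting v(x) := |x_k|^{(k+α+β−2s)/2} u(x), one has the exact identity: ∫_{ℝ^d} ∫_{ℝ^d} |u(x)−u(y)|^2 |x−y|^{−d−2s} |x_k|^α |y_k|^β dx dy − 𝒞(d,s,2,k,α,β) ∫_{ℝ^d} |u(x)|^2 |x_k|^{α+β−2s} dx = ∫_{ℝ^d} ∫_{ℝ^d} |v(x)−v(y)|^2 |x−y|^{−d−2s} |x_k|^{−(k−α+β−2s)/2} |y_k|^{−(k+α−β−2s)/2} dx dy. -/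

import Mathlib

/-!
Write `d = k + m`, `γ = k + α + β - 2s`, so that `v = |x_k|^(γ/2) u`, and let `r = |y_k| / |x_k|`.
After multiplication by their kernels, `|u x - u y|²` and `|v x - v y|²` have the same cross term
`-2 u(x) u(y)`, because the exponents of the second kernel are `α - γ/2` and `β - γ/2`. So the two
energy densities differ only by diagonal terms: with weight `1` for `u`, and with weight `r^(-γ/2)`
on `|u x|²` and `r^(γ/2)` on `|u y|²` for `v`.

A diagonal term is computed by symmetrising in `x` and `y` (`tr_diag`) and then integrating in `y` a
function of `r` against `|x - y|^(-d-2s)`. Integrating out the `m` tangential variables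
(`lintegral_slice`) gives the constant `cst`, the ratio of Gamma functions in `CC`. Polar coordinates
in `ℝ^k` about the direction of `x_k` (`lintegral_polar_axis`) give the angular factor `Psi`, a
`[0, ∞]`-valued `Φ` (`lintegral_kernel`). What remains is a one-dimensional integral times the Hardy
integral `∫ |u|² |x_k|^(α+β-2s)`. Folding `r > 1` onto `(0, 1)` by `r ↦ r⁻¹` (`lintegral_fold`)
turns the difference of the two one-dimensional integrals into the integral with the factor
`(1 - r^(γ/2))²`, that is `𝒞₁` (`coef_eq`).

The diagonal terms diverge at `r = 1`, so the comparison is first made with `r` kept away from `1`,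
where everything is finite (`tr_identity`). Written additively, both sides increase to the full
integrals, so monotone convergence in `[0, ∞]` gives the identity without any principal value
(`full_identity`). Finally, the Hardy integral and the energy of `u` are finite (`hardy_lt_top`,
`full_en_lt_top`), hence so are all other terms, and the identity can be read in `ℝ`. Finiteness of
`𝒞₁` itself needs no separate estimate: if the Hardy integral is nonzero, it follows from finiteness
of the energy.
-/

open MeasureTheory Real Set Filter Topology

noncomputable section

/-- Surface measure `|𝕊^m|` of the unit sphere `𝕊^m ⊆ ℝ^(m+1)`. -/
def sphereVol (m : ℕ) : ℝ :=
  2 * Real.pi ^ (((m : ℝ) + 1) / 2) / Real.Gamma (((m : ℝ) + 1) / 2)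

/-- The profile function `Φ_{d,s,p}(r)`. -/
def Phi (d : ℕ) (s p r : ℝ) : ℝ :=
  if d = 1 then (1 - r) ^ (-1 - s * p) + (1 + r) ^ (-1 - s * p)
  else sphereVol (d - 2) *
    ∫ t in Icc (-1 : ℝ) 1,
      (1 - t ^ 2) ^ (((d : ℝ) - 3) / 2) * (1 - 2 * t * r + r ^ 2) ^ (-(((d : ℝ) + s * p) / 2))

/-- The sharp constant `𝒞₁(d,s,p,α,β)` for the weighted fractional Hardy inequality with
point singularity. -/
def C1 (d : ℕ) (s p a b : ℝ) : ℝ :=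
  ∫ r in Ioo (0 : ℝ) 1,
    r ^ (s * p - 1) * (r ^ (-a) + r ^ (-b)) *
      |1 - r ^ (((d : ℝ) + a + b - s * p) / p)| ^ p * Phi d s p r

/-- The sharp constant `𝒞(d,s,p,k,α,β)` for the weighted fractional Hardy inequality with
singularity on a flat submanifold of codimension `k`. -/
def CC (d k : ℕ) (s p a b : ℝ) : ℝ :=
  Real.pi ^ (((d : ℝ) - (k : ℝ)) / 2) * Real.Gamma (((k : ℝ) + s * p) / 2) /
    Real.Gamma (((d : ℝ) + s * p) / 2) * C1 k s p a b

/-- `|x_k|`: the Euclidean norm of the vector of the first `k` coordinates of `x ∈ ℝ^d`. -/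
def pnorm (d k : ℕ) (x : EuclideanSpace ℝ (Fin d)) : ℝ :=
  Real.sqrt (∑ i : Fin d, if (i : ℕ) < k then x i ^ 2 else 0)

/-! ### Polar coordinates and the splitting `ℝ^(k+m) = ℝ^k × ℝ^m` -/

open scoped ENNReal

/-- `ℝ^n` with its Euclidean norm. -/
abbrev Eu (n : ℕ) := EuclideanSpace ℝ (Fin n)

lemma sphereVol_pos (n : ℕ) : 0 < sphereVol n := by
  unfold sphereVol
  have := Real.Gamma_pos_of_pos (s := ((n : ℝ) + 1) / 2) (by positivity)
  positivity

lemma volume_ball_eq (n : ℕ) :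
    ((n + 1 : ℕ) : ℝ≥0∞) * volume (Metric.ball (0 : Eu (n + 1)) 1) = ENNReal.ofReal (sphereVol n) := by
  rw [EuclideanSpace.volume_ball]
  rw [← ENNReal.ofReal_natCast, ← ENNReal.ofReal_pow (by norm_num), ← ENNReal.ofReal_mul (by positivity),
    ← ENNReal.ofReal_mul (by positivity)]
  congr 1
  unfold sphereVol
  have h0 : (0 : ℝ) < ((n : ℝ) + 1) / 2 := by positivity
  have h1 := Real.Gamma_pos_of_pos h0
  simp only [Fintype.card_fin, Nat.cast_add, Nat.cast_one, one_pow, one_mul]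
  rw [Real.Gamma_add_one h0.ne', Real.sqrt_eq_rpow, ← Real.rpow_natCast, ← Real.rpow_mul pi_pos.le]
  have : (1 / 2 : ℝ) * ((n + 1 : ℕ) : ℝ) = ((n : ℝ) + 1) / 2 := by push_cast; ring
  rw [this]
  field_simp

/-- Integration of a radial function in polar coordinates. -/
lemma lintegral_radial (n : ℕ) (f : ℝ → ℝ≥0∞) (hf : Measurable f) :
    ∫⁻ x : Eu (n + 1), f ‖x‖ =
      ENNReal.ofReal (sphereVol n) * ∫⁻ r in Ioi 0, ENNReal.ofReal (r ^ n) * f r := by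
  have hdim : Module.finrank ℝ (Eu (n + 1)) = n + 1 := by simp
  calc
    ∫⁻ x : Eu (n + 1), f ‖x‖ = ∫⁻ x : ({(0)}ᶜ : Set (Eu (n + 1))), f (‖x.1‖) ∂(Measure.comap Subtype.val volume) := by
      rw [lintegral_subtype_comap (measurableSet_singleton _).compl (fun x ↦ f ‖x‖),
        restrict_compl_singleton]
    _ = ∫⁻ x, f x.2 ∂(volume : Measure (Eu (n + 1))).toSphere.prod (.volumeIoiPow n) := by
      have h := (volume : Measure (Eu (n + 1))).measurePreserving_homeomorphUnitSphereProd
      rw [hdim, Nat.add_sub_cancel] at h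
      rw [← h.lintegral_comp_emb (Homeomorph.measurableEmbedding _)]
      simp
    _ = (volume : Measure (Eu (n + 1))).toSphere univ *
          ∫⁻ x : Ioi (0 : ℝ), f x ∂.volumeIoiPow n := by
      rw [lintegral_prod _ (by fun_prop)]
      simp [mul_comm]
    _ = _ := by
      rw [Measure.toSphere_apply_univ, hdim, volume_ball_eq]
      congr 1
      rw [Measure.volumeIoiPow, lintegral_withDensity_eq_lintegral_mul _ (by fun_prop) (by fun_prop)]
      exact lintegral_subtype_comap measurableSet_Ioi (fun r ↦ ENNReal.ofReal (r ^ n) * f r)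

/-- The identification `ℝ^k × ℝ^m ≃ ℝ^(k+m)` by concatenation of coordinates. -/
def glue (k m : ℕ) : Eu k × Eu m ≃ᵐ Eu (k + m) :=
  ((MeasurableEquiv.toLp 2 (Fin k → ℝ)).symm.prodCongr
    (MeasurableEquiv.toLp 2 (Fin m → ℝ)).symm).trans
  (((MeasurableEquiv.sumPiEquivProdPi (fun _ : Fin k ⊕ Fin m ↦ ℝ)).symm.trans
    (MeasurableEquiv.piCongrLeft (fun _ ↦ ℝ) finSumFinEquiv)).trans
    (MeasurableEquiv.toLp 2 (Fin (k + m) → ℝ)))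

lemma glue_measurePreserving (k m : ℕ) : MeasurePreserving (glue k m) := by
  unfold glue
  have h1 := (EuclideanSpace.volume_preserving_symm_measurableEquiv_toLp (Fin k)).prod
    (EuclideanSpace.volume_preserving_symm_measurableEquiv_toLp (Fin m))
  have h2 := volume_measurePreserving_sumPiEquivProdPi_symm (fun _ : Fin k ⊕ Fin m ↦ ℝ)
  have h3 := volume_measurePreserving_piCongrLeft (fun _ ↦ ℝ) (finSumFinEquiv (m := k) (n := m))
  have h4 := (EuclideanSpace.volume_preserving_symm_measurableEquiv_toLp (Fin (k + m))).symm
  exact h4.comp (h3.comp (h2.comp h1))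

lemma glue_castAdd (k m : ℕ) (a : Eu k) (b : Eu m) (i : Fin k) :
    glue k m (a, b) (Fin.castAdd m i) = a i := by
  have := Equiv.piCongrLeft_sumInl (fun _ : Fin (k + m) ↦ ℝ) finSumFinEquiv a.ofLp b.ofLp i
  exact this

lemma glue_natAdd (k m : ℕ) (a : Eu k) (b : Eu m) (i : Fin m) :
    glue k m (a, b) (Fin.natAdd k i) = b i := by
  have := Equiv.piCongrLeft_sumInr (fun _ : Fin (k + m) ↦ ℝ) finSumFinEquiv a.ofLp b.ofLp i
  exact this

lemma pnorm_glue (k m : ℕ) (a : Eu k) (b : Eu m) : pnorm (k + m) k (glue k m (a, b)) = ‖a‖ := by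
  unfold pnorm
  rw [EuclideanSpace.norm_eq, Fin.sum_univ_add]
  simp [glue_castAdd]

lemma norm_sub_glue (k m : ℕ) (a a' : Eu k) (b b' : Eu m) :
    ‖glue k m (a, b) - glue k m (a', b')‖ = √(‖a - a'‖ ^ 2 + ‖b - b'‖ ^ 2) := by
  rw [EuclideanSpace.norm_eq, Fin.sum_univ_add]
  simp [glue_castAdd, glue_natAdd, EuclideanSpace.norm_sq_eq]

lemma norm_glue (k m : ℕ) (a : Eu k) (b : Eu m) :
    ‖glue k m (a, b)‖ = √(‖a‖ ^ 2 + ‖b‖ ^ 2) := by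
  rw [EuclideanSpace.norm_eq, Fin.sum_univ_add]
  simp [glue_castAdd, glue_natAdd, EuclideanSpace.norm_sq_eq]

lemma lintegral_glue (k m : ℕ) (f : Eu (k + m) → ℝ≥0∞) (hf : Measurable f) :
    ∫⁻ x, f x = ∫⁻ a : Eu k, ∫⁻ b : Eu m, f (glue k m (a, b)) := by
  rw [← (glue_measurePreserving k m).lintegral_comp_emb (glue k m).measurableEmbedding]
  rw [Measure.volume_eq_prod, lintegral_prod (fun p ↦ f (glue k m p)) (hf.comp (glue k m).measurable).aemeasurable]

lemma measurable_pnorm (d k : ℕ) : Measurable (pnorm d k) := by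
  unfold pnorm
  refine (Finset.measurable_sum _ fun i _ ↦ ?_).sqrt
  split_ifs <;> fun_prop

lemma pnorm_nonneg (d k : ℕ) (x) : 0 ≤ pnorm d k x := Real.sqrt_nonneg _

/-! ### Integration over slices and about an axis -/

lemma lintegral_Gamma (q B : ℝ) (hq : 0 < q) (hB : 0 < B) :
    ∫⁻ t in Ioi (0 : ℝ), ENNReal.ofReal (t ^ (q - 1) * rexp (-(B * t))) =
      ENNReal.ofReal (B ^ (-q) * Real.Gamma q) := by
  have h := Real.integral_rpow_mul_exp_neg_mul_Ioi hq hB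
  have hG := Real.Gamma_pos_of_pos hq
  have e : (1 / B) ^ q = B ^ (-q) := by
    rw [one_div, Real.inv_rpow hB.le, Real.rpow_neg hB.le]
  rw [e] at h
  rw [← h, ofReal_integral_eq_lintegral_ofReal]
  · refine Integrable.of_integral_ne_zero ?_
    rw [h]; positivity
  · refine (ae_restrict_mem measurableSet_Ioi).mono fun t ht ↦ ?_
    have : (0 : ℝ) < t := ht
    positivity

lemma lintegral_gaussian (m : ℕ) (t : ℝ) (ht : 0 < t) :
    ∫⁻ z : Eu m, ENNReal.ofReal (rexp (-(t * ‖z‖ ^ 2))) =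
      ENNReal.ofReal ((π / t) ^ ((m : ℝ) / 2)) := by
  have h := GaussianFourier.integral_rexp_neg_mul_sq_norm (V := Eu m) ht
  simp only [finrank_euclideanSpace, Fintype.card_fin, neg_mul] at h
  rw [← h, ofReal_integral_eq_lintegral_ofReal]
  · refine Integrable.of_integral_ne_zero ?_
    rw [h]; positivity
  · exact Eventually.of_forall fun z ↦ (Real.exp_pos _).le

/-- Integrating `(A² + |z|²)^(-(m+κ)/2)` over `z ∈ ℝ^m`: write the power as a Gamma integral of
Gaussians and exchange the order of integration. -/
lemma lintegral_slice (m : ℕ) (κ A : ℝ) (hκ : 0 < κ) (hA : 0 < A) :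
    ∫⁻ z : Eu m, ENNReal.ofReal (√(A ^ 2 + ‖z‖ ^ 2) ^ (-(m : ℝ) - κ)) =
      ENNReal.ofReal (π ^ ((m : ℝ) / 2) * Real.Gamma (κ / 2) / Real.Gamma (((m : ℝ) + κ) / 2)) *
        ENNReal.ofReal (A ^ (-κ)) := by
  set q : ℝ := ((m : ℝ) + κ) / 2 with hq
  have hq0 : 0 < q := by positivity
  have hG := Real.Gamma_pos_of_pos hq0
  have hG2 := Real.Gamma_pos_of_pos (half_pos hκ)
  have e1 : ∀ z : Eu m, ENNReal.ofReal (√(A ^ 2 + ‖z‖ ^ 2) ^ (-(m : ℝ) - κ)) * ENNReal.ofReal (Real.Gamma q)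
      = ∫⁻ t in Ioi (0 : ℝ), ENNReal.ofReal (t ^ (q - 1) * rexp (-(A ^ 2 * t))) *
          ENNReal.ofReal (rexp (-(t * ‖z‖ ^ 2))) := by
    intro z
    have hB : 0 < A ^ 2 + ‖z‖ ^ 2 := by positivity
    have : √(A ^ 2 + ‖z‖ ^ 2) ^ (-(m : ℝ) - κ) = (A ^ 2 + ‖z‖ ^ 2) ^ (-q) := by
      rw [Real.sqrt_eq_rpow, ← Real.rpow_mul hB.le]
      congr 1; rw [hq]; ring
    rw [this, ← ENNReal.ofReal_mul (by positivity), ← lintegral_Gamma q _ hq0 hB]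
    refine lintegral_congr fun t ↦ ?_
    rw [← ENNReal.ofReal_mul' (by positivity), mul_assoc, ← Real.exp_add]
    congr 3; ring_nf
  have hG' : ENNReal.ofReal (Real.Gamma q) ≠ 0 := by simpa using hG
  rw [← ENNReal.mul_left_inj hG' ENNReal.ofReal_ne_top,
    ← lintegral_mul_const' _ _ ENNReal.ofReal_ne_top]
  simp_rw [e1]
  rw [lintegral_lintegral_swap (by fun_prop)]
  have e2 : ∀ t ∈ Ioi (0 : ℝ), ∫⁻ z : Eu m, ENNReal.ofReal (t ^ (q - 1) * rexp (-(A ^ 2 * t))) *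
          ENNReal.ofReal (rexp (-(t * ‖z‖ ^ 2))) =
        ENNReal.ofReal (π ^ ((m : ℝ) / 2)) * ENNReal.ofReal (t ^ (κ / 2 - 1) * rexp (-(A ^ 2 * t))) := by
    intro t ht
    have ht : 0 < t := ht
    rw [lintegral_const_mul' _ _ ENNReal.ofReal_ne_top, lintegral_gaussian m t ht,
      ← ENNReal.ofReal_mul (by positivity), ← ENNReal.ofReal_mul (by positivity)]
    congr 1
    rw [Real.div_rpow pi_pos.le ht.le]
    have : t ^ (q - 1) = t ^ (κ / 2 - 1) * t ^ ((m : ℝ) / 2) := by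
      rw [← Real.rpow_add ht]; congr 1; rw [hq]; ring
    rw [this]
    have := (Real.rpow_pos_of_pos ht ((m : ℝ) / 2)).ne'
    field_simp
  rw [setLIntegral_congr_fun measurableSet_Ioi e2, lintegral_const_mul' _ _ ENNReal.ofReal_ne_top,
    lintegral_Gamma _ _ (half_pos hκ) (by positivity), ← ENNReal.ofReal_mul (by positivity),
    ← ENNReal.ofReal_mul (by positivity), ← ENNReal.ofReal_mul (by positivity)]
  congr 1
  have : (A ^ 2) ^ (-(κ / 2)) = A ^ (-κ) := by
    rw [← Real.rpow_natCast, ← Real.rpow_mul hA.le]; congr 1; push_cast; ring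
  rw [this]
  field_simp

lemma lintegral_Eu_one (f : ℝ → ℝ≥0∞) : ∫⁻ a : Eu 1, f (a 0) = ∫⁻ x : ℝ, f x := by
  have h1 := EuclideanSpace.volume_preserving_symm_measurableEquiv_toLp (Fin 1)
  have h2 := volume_preserving_funUnique (Fin 1) ℝ
  have h3 : MeasurePreserving ((MeasurableEquiv.toLp 2 (Fin 1 → ℝ)).symm.trans
      (MeasurableEquiv.funUnique (Fin 1) ℝ)) (volume : Measure (Eu 1)) (volume : Measure ℝ) := by
    have h2' : MeasurePreserving (MeasurableEquiv.funUnique (Fin 1) ℝ)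
        (volume : Measure (Fin 1 → ℝ)) (volume : Measure ℝ) := by convert h2
    exact h2'.comp h1
  exact h3.lintegral_comp_emb (MeasurableEquiv.measurableEmbedding _) f

/-- Polar coordinates in `ℝ^(n+2)` for functions of `|z|` and of the first coordinate `z₀`, the
latter written as `|z| t` with `t ∈ (-1, 1)`. -/
lemma lintegral_polar_axis (n : ℕ) (F : ℝ → ℝ → ℝ≥0∞) (hF : Measurable (Function.uncurry F)) :
    ∫⁻ z : Eu (1 + (n + 1)), F ‖z‖ (z 0) =
      ENNReal.ofReal (sphereVol n) * ∫⁻ r in Ioi (0 : ℝ), ENNReal.ofReal (r ^ (n + 1)) *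
        ∫⁻ t in Ioo (-1 : ℝ) 1, ENNReal.ofReal ((1 - t ^ 2) ^ (((n : ℝ) - 1) / 2)) * F r (r * t) := by
  have hF' : ∀ {α : Type} [MeasurableSpace α] {f g : α → ℝ}, Measurable f → Measurable g →
      Measurable fun x ↦ F (f x) (g x) := fun hf hg ↦ hF.comp (hf.prodMk hg)
  have hz : ∀ (a : Eu 1) (b : Eu (n + 1)), glue 1 (n + 1) (a, b) 0 = a 0 := fun a b ↦
    glue_castAdd 1 (n + 1) a b 0
  have ha : ∀ a : Eu 1, ‖a‖ ^ 2 = (a 0) ^ 2 := fun a ↦ by simp [EuclideanSpace.norm_sq_eq]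
  rw [lintegral_glue 1 (n + 1) _ (hF' measurable_norm (by fun_prop))]
  simp_rw [norm_glue, hz, ha]
  rw [lintegral_Eu_one (fun a ↦ ∫⁻ b : Eu (n + 1), F √(a ^ 2 + ‖b‖ ^ 2) a)]
  have h1 : ∀ a : ℝ, ∫⁻ b : Eu (n + 1), F √(a ^ 2 + ‖b‖ ^ 2) a =
      ∫⁻ ρ : ℝ, (Ioi 0).indicator (fun ρ ↦ ENNReal.ofReal (sphereVol n) * (ENNReal.ofReal (ρ ^ n) * F √(a ^ 2 + ρ ^ 2) a)) ρ := by
    intro a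
    rw [lintegral_radial n (fun ρ ↦ F √(a ^ 2 + ρ ^ 2) a) (hF' (by fun_prop) (by fun_prop)),
      lintegral_indicator measurableSet_Ioi, lintegral_const_mul' _ _ ENNReal.ofReal_ne_top]
  have h2 : ∫⁻ a : ℝ, ∫⁻ b : Eu (n + 1), F √(a ^ 2 + ‖b‖ ^ 2) a =
      ENNReal.ofReal (sphereVol n) * ∫⁻ r in Ioi (0 : ℝ), ∫⁻ θ in Ioo 0 π,
        ENNReal.ofReal r * (ENNReal.ofReal ((r * sin θ) ^ n) * F r (r * cos θ)) := by
    simp_rw [h1]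
    have hm : Measurable (fun p : ℝ × ℝ ↦ (Ioi 0).indicator (fun ρ ↦ ENNReal.ofReal (sphereVol n) * (ENNReal.ofReal (ρ ^ n) * F √(p.1 ^ 2 + ρ ^ 2) p.1)) p.2) := by
      have := hF' (α := ℝ × ℝ) (f := fun p ↦ √(p.1 ^ 2 + p.2 ^ 2)) (g := fun p ↦ p.1) (by fun_prop) (by fun_prop)
      have h3 : Measurable (fun p : ℝ × ℝ ↦ ENNReal.ofReal (sphereVol n) * (ENNReal.ofReal (p.2 ^ n) * F √(p.1 ^ 2 + p.2 ^ 2) p.1)) := by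
        fun_prop
      exact h3.indicator (measurable_snd measurableSet_Ioi)
    rw [← lintegral_prod (fun p : ℝ × ℝ ↦ (Ioi 0).indicator (fun ρ ↦ ENNReal.ofReal (sphereVol n) * (ENNReal.ofReal (ρ ^ n) * F √(p.1 ^ 2 + ρ ^ 2) p.1)) p.2) hm.aemeasurable,
      ← Measure.volume_eq_prod, ← lintegral_comp_polarCoord_symm]
    have hm2 : Measurable (fun p : ℝ × ℝ ↦ ENNReal.ofReal (sphereVol n) * (ENNReal.ofReal p.1 * (ENNReal.ofReal ((p.1 * sin p.2) ^ n) * F p.1 (p.1 * cos p.2)))) := by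
      have := hF' (α := ℝ × ℝ) (f := fun p ↦ p.1) (g := fun p ↦ p.1 * cos p.2) (by fun_prop) (by fun_prop)
      fun_prop
    have h4 : ∀ p ∈ polarCoord.target, ENNReal.ofReal p.1 • (fun p : ℝ × ℝ ↦ (Ioi 0).indicator (fun ρ ↦ ENNReal.ofReal (sphereVol n) * (ENNReal.ofReal (ρ ^ n) * F √(p.1 ^ 2 + ρ ^ 2) p.1)) p.2) (polarCoord.symm p) =
        (Ioi 0 ×ˢ Ioo 0 π).indicator (fun p : ℝ × ℝ ↦ ENNReal.ofReal (sphereVol n) * (ENNReal.ofReal p.1 * (ENNReal.ofReal ((p.1 * sin p.2) ^ n) * F p.1 (p.1 * cos p.2)))) p := by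
      rintro ⟨r, θ⟩ hp
      simp only [polarCoord_target, mem_prod, mem_Ioi, mem_Ioo] at hp
      obtain ⟨hr, hθ1, hθ2⟩ := hp
      simp only [polarCoord_symm_apply, smul_eq_mul]
      by_cases hθ : 0 < θ
      · have hs : 0 < r * sin θ := mul_pos hr (sin_pos_of_pos_of_lt_pi hθ hθ2)
        rw [indicator_of_mem (by exact hs), indicator_of_mem (by exact ⟨hr, hθ, hθ2⟩)]
        have : √((r * cos θ) ^ 2 + (r * sin θ) ^ 2) = r := by
          rw [show (r * cos θ) ^ 2 + (r * sin θ) ^ 2 = r ^ 2 * (sin θ ^ 2 + cos θ ^ 2) by ring,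
            sin_sq_add_cos_sq, mul_one, Real.sqrt_sq hr.le]
        simp only [this]
        ring
      · have hs : ¬ 0 < r * sin θ := by
          have := sin_nonpos_of_nonpos_of_neg_pi_le (not_lt.1 hθ) hθ1.le
          nlinarith
        rw [indicator_of_notMem (by exact hs), indicator_of_notMem, mul_zero]
        exact fun h ↦ hθ h.2.1
    rw [setLIntegral_congr_fun polarCoord.open_target.measurableSet h4,
      setLIntegral_indicator (measurableSet_Ioi.prod measurableSet_Ioo)]
    have : (Ioi 0 ×ˢ Ioo 0 π) ∩ polarCoord.target = (Ioi 0 ×ˢ Ioo 0 π) := by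
      rw [inter_eq_left, polarCoord_target]
      exact prod_mono le_rfl (Ioo_subset_Ioo (by linarith [pi_pos]) le_rfl)
    rw [this, lintegral_const_mul' _ _ ENNReal.ofReal_ne_top, Measure.volume_eq_prod,
      setLIntegral_prod _ ?_]
    have := hF' (α := ℝ × ℝ) (f := fun p ↦ p.1) (g := fun p ↦ p.1 * cos p.2) (by fun_prop) (by fun_prop)
    fun_prop
  refine h2.trans ?_
  congr 1
  refine setLIntegral_congr_fun measurableSet_Ioi fun r hr ↦ ?_
  have hr : 0 < r := hr
  have himg : cos '' Ioo 0 π = Ioo (-1) 1 := by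
    apply Subset.antisymm
    · rintro _ ⟨θ, ⟨h0, h1⟩, rfl⟩
      constructor
      · have := Real.strictAntiOn_cos ⟨h0.le, h1.le⟩ ⟨pi_pos.le, le_rfl⟩ h1
        simpa using this
      · have := Real.strictAntiOn_cos ⟨le_rfl, pi_pos.le⟩ ⟨h0.le, h1.le⟩ h0
        simpa using this
    · rintro t ⟨h0, h1⟩
      exact ⟨arccos t, ⟨arccos_pos.2 h1, arccos_lt_pi.2 h0⟩, cos_arccos h0.le h1.le⟩
  rw [← himg, lintegral_image_eq_lintegral_abs_deriv_mul measurableSet_Ioo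
    (fun θ _ ↦ (hasDerivAt_cos θ).hasDerivWithinAt) (injOn_cos.mono Ioo_subset_Icc_self),
    ← lintegral_const_mul' _ _ ENNReal.ofReal_ne_top]
  refine setLIntegral_congr_fun measurableSet_Ioo fun θ hθ ↦ ?_
  have hs : 0 < sin θ := sin_pos_of_pos_of_lt_pi hθ.1 hθ.2
  rw [← mul_assoc, ← mul_assoc, ← mul_assoc, ← ENNReal.ofReal_mul hr.le,
    ← ENNReal.ofReal_mul (by positivity), ← ENNReal.ofReal_mul (by positivity)]
  congr 2
  have h5 : 1 - cos θ ^ 2 = sin θ ^ 2 := by rw [← sin_sq_add_cos_sq θ]; ring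
  rw [h5, abs_neg, abs_of_pos hs, ← Real.rpow_natCast (sin θ) 2, ← Real.rpow_mul hs.le]
  have h6 : ((2 : ℕ) : ℝ) * (((n : ℝ) - 1) / 2) = (n : ℝ) - 1 := by push_cast; ring
  rw [h6, Real.rpow_sub hs, Real.rpow_natCast, Real.rpow_one]
  field_simp
  ring

/-! ### The angular factor and the reduction to one radial variable -/

/-- The `[0, ∞]`-valued version of `Φ_{k,s,2}`, defined for all `r > 0` (also `r ≥ 1`): the
angular integral of `|e - r θ|^(-k-2s)` over the unit sphere of `ℝ^k`. -/
def Psi (k : ℕ) (s r : ℝ) : ℝ≥0∞ :=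
  if k = 1 then ENNReal.ofReal (|1 - r| ^ (-1 - s * 2)) + ENNReal.ofReal (|1 + r| ^ (-1 - s * 2))
  else ENNReal.ofReal (sphereVol (k - 2)) *
    ∫⁻ t in Ioo (-1 : ℝ) 1,
      ENNReal.ofReal ((1 - t ^ 2) ^ (((k : ℝ) - 3) / 2) *
        (1 - 2 * t * r + r ^ 2) ^ (-(((k : ℝ) + s * 2) / 2)))

lemma measurable_Psi (k : ℕ) (s : ℝ) : Measurable (Psi k s) := by
  unfold Psi
  split_ifs
  · fun_prop
  · refine Measurable.const_mul (Measurable.lintegral_prod_right ?_) _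
    fun_prop

/-- Angular reduction with the pole at a unit vector. -/
lemma lintegral_unit (n : ℕ) (s : ℝ) (g : ℝ → ℝ≥0∞) (hg : Measurable g) :
    ∫⁻ z : Eu (n + 1), g ‖z‖ * ENNReal.ofReal (‖EuclideanSpace.single 0 1 - z‖ ^ (-((n + 1 : ℕ) : ℝ) - 2 * s)) =
      ∫⁻ r in Ioi (0 : ℝ), g r * (ENNReal.ofReal (r ^ n) * Psi (n + 1) s r) := by
  rcases n with _ | n
  · have h1 : ∀ z : Eu 1, ‖z‖ = |z 0| := fun z ↦ by simp [EuclideanSpace.norm_eq, Real.sqrt_sq_eq_abs]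
    simp_rw [h1]
    have h2 : ∀ z : Eu 1, ((EuclideanSpace.single 0 1 : Eu 1) - z) 0 = 1 - z 0 := by
      intro z; simp
    simp only [zero_add, h2]
    rw [lintegral_Eu_one (fun a ↦ g |a| * ENNReal.ofReal (|1 - a| ^ (-((1 : ℕ) : ℝ) - 2 * s)))]
    rw [← lintegral_add_compl _ (measurableSet_Ioi (a := (0:ℝ))), compl_Ioi,
      setLIntegral_congr Iio_ae_eq_Iic.symm,
      ← (Measure.measurePreserving_neg (volume : Measure ℝ)).setLIntegral_comp_preimage_emb
        (MeasurableEquiv.neg ℝ).measurableEmbedding _ (Iio 0)]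
    have : (Neg.neg : ℝ → ℝ) ⁻¹' Iio 0 = Ioi 0 := by ext; simp
    rw [this, ← lintegral_add_left (by fun_prop)]
    refine setLIntegral_congr_fun measurableSet_Ioi fun r hr ↦ ?_
    have hr : 0 < r := hr
    simp only [Psi, if_true, abs_neg, abs_of_pos hr, pow_zero, ENNReal.ofReal_one, one_mul,
      sub_neg_eq_add, Nat.cast_one, mul_comm 2 s]
    rw [mul_add]
  · obtain ⟨k, hk⟩ : ∃ k, k = n + 1 + 1 := ⟨_, rfl⟩
    have hk' : k = 1 + (n + 1) := by omega
    have key : ∫⁻ z : Eu (1 + (n + 1)), g ‖z‖ * ENNReal.ofReal (‖EuclideanSpace.single 0 1 - z‖ ^ (-((1 + (n + 1) : ℕ) : ℝ) - 2 * s)) =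
      ∫⁻ r in Ioi (0 : ℝ), g r * (ENNReal.ofReal (r ^ (n + 1)) * Psi (1 + (n + 1)) s r) := by
      have h1 : ∀ z : Eu (1 + (n + 1)), ‖EuclideanSpace.single 0 1 - z‖ ^ (-((1 + (n + 1) : ℕ) : ℝ) - 2 * s)
          = (1 - 2 * z 0 + ‖z‖ ^ 2) ^ (-((((1 + (n + 1) : ℕ) : ℝ) + s * 2) / 2)) := by
        intro z
        have : (1 - 2 * z 0 + ‖z‖ ^ 2) = ‖EuclideanSpace.single (0 : Fin (1 + (n + 1))) (1 : ℝ) - z‖ ^ 2 := by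
          rw [norm_sub_sq_real, EuclideanSpace.inner_single_left]
          simp
        rw [this, ← Real.rpow_natCast, ← Real.rpow_mul (norm_nonneg _)]
        congr 1; push_cast; ring
      simp_rw [h1]
      rw [lintegral_polar_axis n (fun r a ↦ g r * ENNReal.ofReal ((1 - 2 * a + r ^ 2) ^ (-((((1 + (n + 1) : ℕ) : ℝ) + s * 2) / 2)))) (by fun_prop),
        ← lintegral_const_mul' _ _ ENNReal.ofReal_ne_top]
      refine setLIntegral_congr_fun measurableSet_Ioi fun r hr ↦ ?_
      have hr : 0 < r := hr
      have e1 : (1 + (n + 1) - 2) = n := by omega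
      have e2 : (((1 + (n + 1) : ℕ) : ℝ) - 3) / 2 = ((n : ℝ) - 1) / 2 := by push_cast; ring
      simp only [Psi, show ¬ (1 + (n + 1) = 1) by omega, if_false, e1, e2]
      have e3 : ∀ t ∈ Ioo (-1 : ℝ) 1, ENNReal.ofReal ((1 - t ^ 2) ^ (((n : ℝ) - 1) / 2)) *
          (g r * ENNReal.ofReal ((1 - 2 * (r * t) + r ^ 2) ^ (-((((1 + (n + 1) : ℕ) : ℝ) + s * 2) / 2)))) =
          g r * ENNReal.ofReal ((1 - t ^ 2) ^ (((n : ℝ) - 1) / 2) *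
            (1 - 2 * t * r + r ^ 2) ^ (-((((1 + (n + 1) : ℕ) : ℝ) + s * 2) / 2))) := by
        intro t ht
        have : 0 ≤ 1 - t ^ 2 := by nlinarith [ht.1, ht.2]
        rw [ENNReal.ofReal_mul (by positivity)]
        rw [show 2 * (r * t) = 2 * t * r by ring]
        ring
      rw [setLIntegral_congr_fun measurableSet_Ioo e3, lintegral_const_mul _ (by fun_prop)]
      ring
    have aux : ∀ m, m = 1 + (n + 1) → ∀ [NeZero m], ∫⁻ z : Eu m, g ‖z‖ * ENNReal.ofReal (‖EuclideanSpace.single 0 1 - z‖ ^ (-((m : ℕ) : ℝ) - 2 * s)) =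
      ∫⁻ r in Ioi (0 : ℝ), g r * (ENNReal.ofReal (r ^ (n + 1)) * Psi m s r) := by
      rintro m rfl _
      exact key
    exact aux (n + 1 + 1) (by omega)

lemma lintegral_scale (k : ℕ) (ρ : ℝ) (hρ : 0 < ρ) (H : Eu k → ℝ≥0∞) (hH : Measurable H) :
    ∫⁻ z, H z = ENNReal.ofReal (ρ ^ k) * ∫⁻ z, H (ρ • z) := by
  rw [← lintegral_map hH (measurable_const_smul ρ), Measure.map_addHaar_smul _ hρ.ne',
    lintegral_smul_measure, smul_eq_mul, ← mul_assoc, ← ENNReal.ofReal_mul (by positivity)]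
  simp only [finrank_euclideanSpace, Fintype.card_fin]
  rw [abs_of_pos (by positivity), mul_inv_cancel₀ (by positivity)]
  simp

/-- Angular reduction with the pole at any `x ≠ 0`: scale by `|x|`, and map `x / |x|` to the first
basis vector by a reflection. -/
lemma lintegral_vec (n : ℕ) (s : ℝ) (x : Eu (n + 1)) (hx : x ≠ 0) (g : ℝ → ℝ≥0∞) (hg : Measurable g) :
    ∫⁻ z, g (‖z‖ / ‖x‖) * ENNReal.ofReal (‖x - z‖ ^ (-((n + 1 : ℕ) : ℝ) - 2 * s)) =
      ENNReal.ofReal (‖x‖ ^ (-(2 * s))) *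
        ∫⁻ r in Ioi (0 : ℝ), g r * (ENNReal.ofReal (r ^ n) * Psi (n + 1) s r) := by
  have hρ : 0 < ‖x‖ := norm_pos_iff.2 hx
  set ρ := ‖x‖ with hρd
  set e : Eu (n + 1) := EuclideanSpace.single 0 1 with he
  have hne : ‖(‖x‖⁻¹ • x)‖ = ‖e‖ := by
    rw [norm_smul, norm_inv, norm_norm, inv_mul_cancel₀ hρ.ne', he, PiLp.norm_single]; simp
  set R := Submodule.reflection (ℝ ∙ (‖x‖⁻¹ • x - e))ᗮ with hR
  have hRx : R (ρ⁻¹ • x) = e := Submodule.reflection_sub hne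
  rw [lintegral_scale (n + 1) ρ hρ _ (by fun_prop),
    ← R.symm.measurePreserving.lintegral_comp_emb R.symm.toMeasurableEquiv.measurableEmbedding]
  have h1 : ∀ z, ‖x - ρ • R.symm z‖ = ρ * ‖e - z‖ := by
    intro z
    rw [← hRx, ← R.norm_map (x - ρ • R.symm z), map_sub, map_smul, map_smul,
      LinearIsometryEquiv.apply_symm_apply]
    rw [show R x - ρ • z = ρ • (ρ⁻¹ • R x - z) by
      rw [smul_sub, smul_smul, mul_inv_cancel₀ hρ.ne', one_smul], norm_smul, Real.norm_of_nonneg hρ.le]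
  have h2 : ∀ z, ‖ρ • R.symm z‖ / ρ = ‖z‖ := by
    intro z
    rw [norm_smul, LinearIsometryEquiv.norm_map, Real.norm_of_nonneg hρ.le, mul_div_cancel_left₀ _ hρ.ne']
  simp_rw [h1, h2]
  have h3 : ∀ z, g ‖z‖ * ENNReal.ofReal ((ρ * ‖e - z‖) ^ (-((n + 1 : ℕ) : ℝ) - 2 * s)) =
      ENNReal.ofReal (ρ ^ (-((n + 1 : ℕ) : ℝ) - 2 * s)) *
        (g ‖z‖ * ENNReal.ofReal (‖e - z‖ ^ (-((n + 1 : ℕ) : ℝ) - 2 * s))) := by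
    intro z
    rw [Real.mul_rpow hρ.le (norm_nonneg _), ENNReal.ofReal_mul (by positivity)]
    ring
  simp_rw [h3]
  rw [lintegral_const_mul' _ _ ENNReal.ofReal_ne_top, lintegral_unit n s g hg, ← mul_assoc,
    ← ENNReal.ofReal_mul (by positivity)]
  congr 2
  rw [← Real.rpow_natCast, ← Real.rpow_add hρ]
  congr 1; ring

/-- The dimensional constant produced by integrating out the `m` variables tangential to `K`. -/
def cst (k m : ℕ) (s : ℝ) : ℝ :=
  π ^ ((m : ℝ) / 2) * Real.Gamma (((k : ℝ) + s * 2) / 2) / Real.Gamma (((m : ℝ) + ((k : ℝ) + s * 2)) / 2)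

/-- Integrating a function of `|y_k| / |x_k|` against `|x - y|^(-d-2s)`. -/
lemma lintegral_kernel (n m : ℕ) (s : ℝ) (hs : 0 < s) (x : Eu (n + 1 + m))
    (hx : 0 < pnorm (n + 1 + m) (n + 1) x) (g : ℝ → ℝ≥0∞) (hg : Measurable g) :
    ∫⁻ y, g (pnorm (n + 1 + m) (n + 1) y / pnorm (n + 1 + m) (n + 1) x) *
        ENNReal.ofReal (‖x - y‖ ^ (-((n + 1 + m : ℕ) : ℝ) - 2 * s)) =
      ENNReal.ofReal (cst (n + 1) m s) * ENNReal.ofReal (pnorm (n + 1 + m) (n + 1) x ^ (-(2 * s))) *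
        ∫⁻ r in Ioi (0 : ℝ), g r * (ENNReal.ofReal (r ^ n) * Psi (n + 1) s r) := by
  obtain ⟨⟨a, b⟩, rfl⟩ := (glue (n + 1) m).surjective x
  have hm := measurable_pnorm (n + 1 + m) (n + 1)
  rw [lintegral_glue _ _ _ (by fun_prop)]
  simp_rw [norm_sub_glue, pnorm_glue] at hx ⊢
  have ha : a ≠ 0 := norm_pos_iff.1 hx
  have : ∀ᵐ z : Eu (n + 1), ∫⁻ w : Eu m, g (‖z‖ / ‖a‖) *
      ENNReal.ofReal (√(‖a - z‖ ^ 2 + ‖b - w‖ ^ 2) ^ (-((n + 1 + m : ℕ) : ℝ) - 2 * s)) =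
      ENNReal.ofReal (cst (n + 1) m s) * (g (‖z‖ / ‖a‖) * ENNReal.ofReal (‖a - z‖ ^ (-((n + 1 : ℕ) : ℝ) - 2 * s))) := by
    have : ∀ᵐ z : Eu (n + 1), z ≠ a := by
      rw [ae_iff]; simp
    filter_upwards [this] with z hz
    rw [lintegral_const_mul _ (by fun_prop),
      lintegral_sub_left_eq_self (fun w : Eu m ↦ ENNReal.ofReal (√(‖a - z‖ ^ 2 + ‖w‖ ^ 2) ^ (-((n + 1 + m : ℕ) : ℝ) - 2 * s))) b]
    have := lintegral_slice m ((n + 1 : ℕ) + s * 2) ‖a - z‖ (by positivity) (norm_pos_iff.2 (sub_ne_zero.2 hz.symm))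
    rw [show -((n + 1 + m : ℕ) : ℝ) - 2 * s = -(m : ℝ) - ((n + 1 : ℕ) + s * 2) by push_cast; ring, this,
      show -((n + 1 : ℕ) : ℝ) - 2 * s = - ((n + 1 : ℕ) + s * 2) by ring, cst]
    ring
  rw [lintegral_congr_ae this, lintegral_const_mul' _ _ ENNReal.ofReal_ne_top, lintegral_vec n s a ha g hg]
  ring

/-! ### Folding by inversion; the coefficients -/

/-- Inversion symmetry, from `|e - t⁻¹ θ| = t⁻¹ |e - t θ|` for unit vectors `e`, `θ`. -/
lemma Psi_inv (n : ℕ) (s t : ℝ) (ht : 0 < t) :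
    Psi (n + 1) s t⁻¹ = ENNReal.ofReal (t ^ ((n : ℝ) + 1 + 2 * s)) * Psi (n + 1) s t := by
  unfold Psi
  split_ifs with h
  · have hn : n = 0 := by omega
    subst hn
    have e : ∀ c : ℝ, |1 + c * t⁻¹| ^ (-1 - s * 2) = t ^ ((0 : ℕ) + 1 + 2 * s) * |t + c| ^ (-1 - s * 2) := by
      intro c
      rw [show 1 + c * t⁻¹ = t⁻¹ * (t + c) by field_simp, abs_mul, abs_of_pos (inv_pos.2 ht),
        Real.mul_rpow (by positivity) (abs_nonneg _), Real.inv_rpow ht.le, ← Real.rpow_neg ht.le]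
      congr 2; push_cast; ring
    have e1 := e (-1)
    have e2 := e 1
    rw [show 1 + -1 * t⁻¹ = 1 - t⁻¹ by ring, show t + -1 = -(1 - t) by ring, abs_neg] at e1
    rw [show 1 + 1 * t⁻¹ = 1 + t⁻¹ by ring, show t + 1 = 1 + t by ring] at e2
    rw [e1, e2, mul_add, ENNReal.ofReal_mul (by positivity), ENNReal.ofReal_mul (by positivity)]
  · rw [mul_left_comm]
    congr 1
    rw [← lintegral_const_mul' _ _ ENNReal.ofReal_ne_top]
    refine setLIntegral_congr_fun measurableSet_Ioo fun r hr ↦ ?_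
    have h1 : 0 ≤ 1 - 2 * r * t + t ^ 2 := by
      nlinarith [hr.1, hr.2, sq_nonneg (1 - t), sq_nonneg (r - t), sq_nonneg (1 + t)]
    have h2 : 1 - 2 * r * t⁻¹ + t⁻¹ ^ 2 = (t ^ 2)⁻¹ * (1 - 2 * r * t + t ^ 2) := by
      field_simp; ring
    rw [← ENNReal.ofReal_mul (by positivity), h2, Real.mul_rpow (by positivity) h1, Real.inv_rpow (by positivity),
      ← Real.rpow_neg (by positivity), ← Real.rpow_natCast t 2, ← Real.rpow_mul ht.le]
    have : ((2 : ℕ) : ℝ) * - -((((n + 1 : ℕ) : ℝ) + s * 2) / 2) = (n : ℝ) + 1 + 2 * s := by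
      push_cast; ring
    rw [this]
    congr 1; ring

/-- The union of a set `S` of ratios with the set of their inverses. -/
def invHull (S : Set ℝ) : Set ℝ := {r | r ∈ S ∨ r⁻¹ ∈ S}

lemma measurableSet_invHull {S : Set ℝ} (hS : MeasurableSet S) : MeasurableSet (invHull S) :=
  hS.union (measurable_inv hS)

/-- Folding radii `r > 1` onto `(0, 1)` by the inversion `r ↦ r⁻¹`. -/
lemma lintegral_fold (n : ℕ) (s : ℝ) {S : Set ℝ} (hS : MeasurableSet S) (hS1 : S ⊆ Ioo 0 1)
    (h : ℝ → ℝ≥0∞) (hh : Measurable h) :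
    ∫⁻ r in Ioi (0 : ℝ), (invHull S).indicator h r * (ENNReal.ofReal (r ^ n) * Psi (n + 1) s r) =
      ∫⁻ r in S, (h r * ENNReal.ofReal (r ^ n) + h r⁻¹ * ENNReal.ofReal (r ^ (2 * s - 1))) * Psi (n + 1) s r := by
  set f : ℝ → ℝ≥0∞ := fun r ↦ h r * (ENNReal.ofReal (r ^ n) * Psi (n + 1) s r) with hf
  have himg : (fun r : ℝ ↦ r⁻¹) '' S = {r | r⁻¹ ∈ S} := by
    ext r; constructor
    · rintro ⟨a, ha, rfl⟩; simpa using ha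
    · intro hr; exact ⟨r⁻¹, hr, inv_inv r⟩
  have hm' : MeasurableSet {r : ℝ | r⁻¹ ∈ S} := measurable_inv hS
  have hdisj : Disjoint S {r : ℝ | r⁻¹ ∈ S} := by
    rw [Set.disjoint_left]
    intro r hr hr'
    have h1 := hS1 hr
    have h2 : r⁻¹ < 1 := (hS1 hr').2
    have := (one_lt_inv₀ h1.1).2 h1.2
    linarith
  have hsub : invHull S ⊆ Ioi 0 := by
    rintro r (hr | hr)
    · exact (hS1 hr).1
    · exact inv_pos.1 (hS1 hr).1
  have h1 : ∀ r, (invHull S).indicator h r * (ENNReal.ofReal (r ^ n) * Psi (n + 1) s r) =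
      (invHull S).indicator f r := by
    intro r
    by_cases hr : r ∈ invHull S <;> simp [hr, hf]
  simp_rw [h1]
  rw [setLIntegral_indicator (measurableSet_invHull hS), inter_eq_left.2 hsub]
  have h2 : invHull S = S ∪ {r : ℝ | r⁻¹ ∈ S} := rfl
  rw [h2, lintegral_union hm' hdisj, ← himg,
    lintegral_image_eq_lintegral_abs_deriv_mul hS
      (fun r hr ↦ (hasDerivAt_inv (hS1 hr).1.ne').hasDerivWithinAt) inv_injective.injOn,
    ← lintegral_add_right' _ ?_]
  · refine setLIntegral_congr_fun hS fun r hr ↦ ?_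
    have hr0 : 0 < r := (hS1 hr).1
    simp only [hf]
    rw [Psi_inv n s r hr0, add_mul, mul_assoc]
    congr 1
    rw [mul_left_comm, mul_assoc]
    congr 1
    rw [← mul_assoc, ← mul_assoc, ← ENNReal.ofReal_mul (by positivity), ← ENNReal.ofReal_mul (by positivity)]
    congr 2
    rw [abs_neg, abs_of_pos (by positivity), ← Real.rpow_natCast, ← Real.rpow_natCast,
      Real.inv_rpow hr0.le, ← Real.rpow_neg hr0.le, ← Real.rpow_neg hr0.le, ← Real.rpow_add hr0, ← Real.rpow_add hr0]
    congr 1; push_cast; ring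
  · have := measurable_Psi (n + 1) s
    simp only [hf]
    fun_prop

lemma lintegral_rpow_lt_top (τ R : ℝ) (hτ : -1 < τ) (hR : 0 < R) :
    ∫⁻ r in Ioo (0 : ℝ) R, ENNReal.ofReal (r ^ τ) < ∞ :=
  Integrable.lintegral_lt_top ((intervalIntegral.integrableOn_Ioo_rpow_iff hR).2 hτ)

/-- The angular factor `Psi` stays bounded away from `r = 1`, in the integrated sense: for
`|z| ≤ l < 1` the distance of `z` to the unit vector `e` is at least `1 - l`. -/
lemma lintegral_Psi_lt_top (n : ℕ) (s : ℝ) (hs : 0 < s) (l : ℝ) (hl : l < 1) (h : ℝ → ℝ≥0∞)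
    (hh : Measurable h) (hf : ∫⁻ r in Ioo (0 : ℝ) 1, h r < ∞) :
    ∫⁻ r in Ioc 0 l, h r * Psi (n + 1) s r < ∞ := by
  set g : ℝ → ℝ≥0∞ := (Ioc 0 l).indicator (fun r ↦ h r / ENNReal.ofReal (r ^ n)) with hg
  have hgm : Measurable g := Measurable.indicator (by fun_prop) measurableSet_Ioc
  have hcancel : ∀ r ∈ Ioc 0 l, g r * ENNReal.ofReal (r ^ n) = h r := by
    intro r hr
    rw [hg, indicator_of_mem hr, ENNReal.div_mul_cancel]
    · simpa using pow_pos hr.1 n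
    · exact ENNReal.ofReal_ne_top
  have hzero : ∀ r ∉ Ioc 0 l, g r = 0 := fun r hr ↦ indicator_of_notMem hr _
  have hsub : Ioc 0 l ⊆ Ioi 0 := fun r hr ↦ hr.1
  have e1 : ∫⁻ r in Ioc 0 l, h r * Psi (n + 1) s r ≤
      ∫⁻ r in Ioi (0 : ℝ), g r * (ENNReal.ofReal (r ^ n) * Psi (n + 1) s r) := by
    calc _ = ∫⁻ r in Ioc 0 l, g r * (ENNReal.ofReal (r ^ n) * Psi (n + 1) s r) := by
          refine setLIntegral_congr_fun measurableSet_Ioc fun r hr ↦ ?_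
          rw [← mul_assoc, hcancel r hr]
      _ ≤ _ := lintegral_mono_set hsub
  refine e1.trans_lt ?_
  rw [← lintegral_unit n s g hgm]
  set C := ENNReal.ofReal ((1 - l) ^ (-((n + 1 : ℕ) : ℝ) - 2 * s))
  have e2 : ∀ z : Eu (n + 1), g ‖z‖ * ENNReal.ofReal (‖EuclideanSpace.single 0 1 - z‖ ^ (-((n + 1 : ℕ) : ℝ) - 2 * s)) ≤ C * g ‖z‖ := by
    intro z
    by_cases hz : ‖z‖ ∈ Ioc 0 l
    · rw [mul_comm]
      gcongr
      refine ENNReal.ofReal_le_ofReal (Real.rpow_le_rpow_of_nonpos (by linarith) ?_ ?_)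
      · have h1 := norm_sub_norm_le (EuclideanSpace.single 0 1 : Eu (n + 1)) z
        rw [PiLp.norm_single] at h1
        simp only [norm_one] at h1
        linarith [hz.2]
      · have : (0 : ℝ) ≤ ((n + 1 : ℕ) : ℝ) := Nat.cast_nonneg _
        linarith
    · simp [hzero _ hz]
  refine (lintegral_mono e2).trans_lt ?_
  rw [lintegral_const_mul' _ _ ENNReal.ofReal_ne_top, lintegral_radial n g hgm]
  refine ENNReal.mul_lt_top ENNReal.ofReal_lt_top (ENNReal.mul_lt_top ENNReal.ofReal_lt_top ?_)
  refine lt_of_le_of_lt ?_ hf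
  have e3 : ∀ r, ENNReal.ofReal (r ^ n) * g r = (Ioc 0 l).indicator h r := by
    intro r
    by_cases hr : r ∈ Ioc 0 l
    · rw [mul_comm, hcancel r hr, indicator_of_mem hr]
    · rw [hzero r hr, indicator_of_notMem hr, mul_zero]
  simp_rw [e3]
  rw [setLIntegral_indicator measurableSet_Ioc]
  refine lintegral_mono_set fun r hr ↦ ⟨hr.1.1, hr.1.2.trans_lt hl⟩

/-- The density of the three coefficients below: `r^(2s-1) (r^(-α) + r^(-β))`, with `a`, `b` in the
roles of `α`, `β` here and below. -/
def Mfun (s a b r : ℝ) : ℝ := r ^ (2 * s - 1) * (r ^ (-a) + r ^ (-b))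

/-- The coefficient of `∫ |u|² |x_k|^(α+β-2s)` in the energies with the ratio `|y_k|/|x_k|`
restricted to `invHull S`; here `k = n + 1`. For `S = (0, 1)` it is the `[0, ∞]`-valued `𝒞₁`. -/
def coefC (n : ℕ) (s a b : ℝ) (S : Set ℝ) : ℝ≥0∞ :=
  ∫⁻ r in S, ENNReal.ofReal ((1 - r ^ (((n + 1 : ℕ) + a + b - 2 * s) / 2)) ^ 2 * Mfun s a b r) * Psi (n + 1) s r

/-- The coefficient of the diagonal terms `|u x|² + |u y|²` of the energy of `u` in the Hardy integral. -/
def coefA (n : ℕ) (s a b : ℝ) (S : Set ℝ) : ℝ≥0∞ :=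
  ∫⁻ r in Ioi (0 : ℝ), (invHull S).indicator (fun r ↦ ENNReal.ofReal (r ^ a + r ^ b)) r *
    (ENNReal.ofReal (r ^ n) * Psi (n + 1) s r)

/-- The coefficient of the diagonal terms `|v x|² + |v y|²` of the energy of `v` in the Hardy integral
of `u`; it carries the extra factor `r^(-γ/2)`, where `γ = k + α + β - 2s`. -/
def coefB (n : ℕ) (s a b : ℝ) (S : Set ℝ) : ℝ≥0∞ :=
  ∫⁻ r in Ioi (0 : ℝ), (invHull S).indicator (fun r ↦ ENNReal.ofReal
    (r ^ (-(((n + 1 : ℕ) + a + b - 2 * s) / 2)) * (r ^ a + r ^ b))) r *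
    (ENNReal.ofReal (r ^ n) * Psi (n + 1) s r)

/-- Fold all three coefficients onto `S`. With `X = r^(γ/2)` the densities of `coefA`, `coefB` and
`coefC` are then `X² + 1`, `2X` and `(1 - X)²` times `Mfun`. -/
lemma coef_eq (n : ℕ) (s a b : ℝ) {S : Set ℝ} (hS : MeasurableSet S) (hS1 : S ⊆ Ioo 0 1) :
    coefA n s a b S = coefB n s a b S + coefC n s a b S := by
  have hP := measurable_Psi (n + 1) s
  unfold coefA coefB coefC
  rw [lintegral_fold n s hS hS1 _ (by fun_prop), lintegral_fold n s hS hS1 _ (by fun_prop), ← lintegral_add_left (by fun_prop)]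
  refine setLIntegral_congr_fun hS fun r hr ↦ ?_
  have hr : 0 < r := (hS1 hr).1
  have h0 : 0 ≤ Mfun s a b r := by unfold Mfun; positivity
  rw [← add_mul]
  congr 1
  rw [← ENNReal.ofReal_mul (by positivity), ← ENNReal.ofReal_mul (by positivity),
    ← ENNReal.ofReal_mul (by positivity), ← ENNReal.ofReal_mul (by positivity),
    ← ENNReal.ofReal_add (by positivity) (by positivity), ← ENNReal.ofReal_add (by positivity) (by positivity),
    ← ENNReal.ofReal_add (by positivity) (by positivity)]
  congr 1
  set g := ((n + 1 : ℕ) + a + b - 2 * s) / 2 with hg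
  have hX : (0 : ℝ) < r ^ g := by positivity
  -- with `X = r^(γ/2)`, everything is a polynomial in `X` times `Mfun`
  have e1 : (r ^ a + r ^ b) * r ^ n = (r ^ g) ^ 2 * Mfun s a b r := by
    unfold Mfun
    rw [← Real.rpow_natCast r n, ← Real.rpow_natCast (r ^ g) 2, ← Real.rpow_mul hr.le, add_mul, mul_add, mul_add,
      ← Real.rpow_add hr, ← Real.rpow_add hr, ← Real.rpow_add hr, ← Real.rpow_add hr,
      ← Real.rpow_add hr, ← Real.rpow_add hr, add_comm]
    congr 2 <;> (rw [hg]; push_cast; ring)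
  have e2 : (r⁻¹ ^ a + r⁻¹ ^ b) * r ^ (2 * s - 1) = Mfun s a b r := by
    unfold Mfun
    rw [Real.inv_rpow hr.le, Real.inv_rpow hr.le, ← Real.rpow_neg hr.le, ← Real.rpow_neg hr.le]; ring
  have e3 : r ^ (-g) = (r ^ g)⁻¹ := Real.rpow_neg hr.le g
  have e4 : r⁻¹ ^ (-g) = r ^ g := by rw [Real.inv_rpow hr.le, e3, inv_inv]
  rw [mul_assoc, mul_assoc, e1, e2, e3, e4]
  field_simp
  ring

/-- The range of `α`, `β` is exactly what makes the diagonal terms integrable at `r = 0` and `r = ∞`. -/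
lemma coefA_lt_top (n : ℕ) (s a b : ℝ) (hs : 0 < s) (ha : a ∈ Ioo (-((n + 1 : ℕ) : ℝ)) (2 * s))
    (hb : b ∈ Ioo (-((n + 1 : ℕ) : ℝ)) (2 * s)) (l : ℝ) (hl : l < 1) :
    coefA n s a b (Ioc 0 l) < ∞ := by
  have hsub : Ioc 0 l ⊆ Ioo 0 1 := fun r hr ↦ ⟨hr.1, hr.2.trans_lt hl⟩
  unfold coefA
  rw [lintegral_fold n s measurableSet_Ioc hsub _ (by fun_prop)]
  apply lintegral_Psi_lt_top n s hs l hl _ (by fun_prop)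
  obtain ⟨ha1, ha2⟩ := ha
  obtain ⟨hb1, hb2⟩ := hb
  push_cast at ha1 hb1
  have e : ∀ r ∈ Ioo (0 : ℝ) 1, ENNReal.ofReal (r ^ a + r ^ b) * ENNReal.ofReal (r ^ n) +
      ENNReal.ofReal (r⁻¹ ^ a + r⁻¹ ^ b) * ENNReal.ofReal (r ^ (2 * s - 1)) =
      (ENNReal.ofReal (r ^ (a + n)) + ENNReal.ofReal (r ^ (b + n))) +
      (ENNReal.ofReal (r ^ (2 * s - 1 - a)) + ENNReal.ofReal (r ^ (2 * s - 1 - b))) := by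
    intro r hr
    have hr : 0 < r := hr.1
    rw [← ENNReal.ofReal_mul (by positivity), ← ENNReal.ofReal_mul (by positivity),
      ← ENNReal.ofReal_add (by positivity) (by positivity), ← ENNReal.ofReal_add (by positivity) (by positivity),
      ← ENNReal.ofReal_add (by positivity) (by positivity), ← ENNReal.ofReal_add (by positivity) (by positivity),
      Real.inv_rpow hr.le, Real.inv_rpow hr.le, ← Real.rpow_neg hr.le, ← Real.rpow_neg hr.le,
      ← Real.rpow_natCast r n, add_mul, add_mul, ← Real.rpow_add hr, ← Real.rpow_add hr,
      ← Real.rpow_add hr, ← Real.rpow_add hr]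
    congr 1; ring_nf
  rw [setLIntegral_congr_fun measurableSet_Ioo e, lintegral_add_left (by fun_prop),
    lintegral_add_left (by fun_prop), lintegral_add_left (by fun_prop)]
  simp only [ENNReal.add_lt_top]
  refine ⟨⟨?_, ?_⟩, ?_, ?_⟩ <;> (refine lintegral_rpow_lt_top _ _ ?_ one_pos; linarith)

/-! ### The identity away from equal ratios -/

/-- The distance `|x_k|` to `K` in `ℝ^(n+1+m)`, with `k = n + 1`. -/
abbrev pn (n m : ℕ) (x : Eu (n + 1 + m)) : ℝ := pnorm (n + 1 + m) (n + 1) x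

lemma measurable_pn (n m : ℕ) : Measurable (pn n m) := measurable_pnorm _ _

lemma pn_nonneg (n m : ℕ) (x) : 0 ≤ pn n m x := pnorm_nonneg _ _ _

/-- The kernel `|x - y|^(-d-2s) |x_k|^a |y_k|^b`, with `d = n + 1 + m`. -/
def hkern (n m : ℕ) (s a b : ℝ) (x y : Eu (n + 1 + m)) : ℝ :=
  ‖x - y‖ ^ (-((n + 1 + m : ℕ) : ℝ) - 2 * s) * pn n m x ^ a * pn n m y ^ b

/-- The integrand of the weighted Gagliardo energy of `w`. -/
def en (n m : ℕ) (s a b : ℝ) (w : Eu (n + 1 + m) → ℝ) (x y : Eu (n + 1 + m)) : ℝ :=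
  |w x - w y| ^ (2 : ℝ) * hkern n m s a b x y

lemma hkern_nonneg (n m : ℕ) (s a b : ℝ) (x y) : 0 ≤ hkern n m s a b x y := by
  have := pn_nonneg n m x
  have := pn_nonneg n m y
  unfold hkern; positivity

lemma en_nonneg (n m : ℕ) (s a b : ℝ) (w) (x y) : 0 ≤ en n m s a b w x y :=
  mul_nonneg (by positivity) (hkern_nonneg ..)

lemma measurable_hkern (n m : ℕ) (s a b : ℝ) : Measurable (Function.uncurry (hkern n m s a b)) := by
  have := measurable_pn n m
  unfold hkern Function.uncurry
  fun_prop

lemma measurable_en (n m : ℕ) (s a b : ℝ) (w) (hw : Measurable w) :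
    Measurable (Function.uncurry (en n m s a b w)) := by
  have := measurable_hkern n m s a b
  unfold en
  unfold Function.uncurry at this ⊢
  fun_prop

/-- The double integral of `f` over the pairs with `|y_k| / |x_k| ∈ invHull S`. -/
def tr (n m : ℕ) (S : Set ℝ) (f : Eu (n + 1 + m) → Eu (n + 1 + m) → ℝ) : ℝ≥0∞ :=
  ∫⁻ x, ∫⁻ y, (invHull S).indicator 1 (pn n m y / pn n m x) * ENNReal.ofReal (f x y)

lemma measurable_ind {S : Set ℝ} (hS : MeasurableSet S) :
    Measurable ((invHull S).indicator (1 : ℝ → ℝ≥0∞)) :=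
  measurable_one.indicator (measurableSet_invHull hS)

lemma ind_inv {S : Set ℝ} (r : ℝ) :
    (invHull S).indicator (1 : ℝ → ℝ≥0∞) r⁻¹ = (invHull S).indicator (1 : ℝ → ℝ≥0∞) r := by
  have : r⁻¹ ∈ invHull S ↔ r ∈ invHull S := by simp [invHull, or_comm]
  by_cases h : r ∈ invHull S
  · rw [indicator_of_mem h, indicator_of_mem (this.2 h)]; rfl
  · rw [indicator_of_notMem h, indicator_of_notMem (mt this.1 h)]

lemma pos_of_mem_invHull {S : Set ℝ} (hS1 : S ⊆ Ioo 0 1) {p q : ℝ} (hp : 0 ≤ p) (hq : 0 ≤ q)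
    (h : q / p ∈ invHull S) : 0 < p ∧ 0 < q := by
  have h1 : 0 < q / p := by
    rcases h with h | h
    · exact (hS1 h).1
    · exact inv_pos.1 (hS1 h).1
  constructor
  · exact hp.lt_of_ne (by rintro rfl; simp at h1)
  · exact hq.lt_of_ne (by rintro rfl; simp at h1)

lemma tr_add (n m : ℕ) {S : Set ℝ} (hS : MeasurableSet S) (f g : Eu (n + 1 + m) → Eu (n + 1 + m) → ℝ)
    (hf : Measurable (Function.uncurry f))
    (hf0 : ∀ x y, 0 ≤ f x y) (hg0 : ∀ x y, 0 ≤ g x y) :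
    tr n m S (fun x y ↦ f x y + g x y) = tr n m S f + tr n m S g := by
  have hI := measurable_ind hS
  have hP := measurable_pn n m
  unfold tr
  rw [← lintegral_add_left]
  · refine lintegral_congr fun x ↦ ?_
    rw [← lintegral_add_left]
    · refine lintegral_congr fun y ↦ ?_
      rw [ENNReal.ofReal_add (hf0 x y) (hg0 x y), mul_add]
    · have : Measurable (f x) := hf.comp measurable_prodMk_left
      fun_prop
  · refine Measurable.lintegral_prod_right ?_
    unfold Function.uncurry at hf
    fun_prop

/-- The cylinders `|y_k| = ρ` are null sets, being spheres times `ℝ^m`. -/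
lemma ae_pn_ne (n m : ℕ) (ρ : ℝ) : ∀ᵐ y : Eu (n + 1 + m), pn n m y ≠ ρ := by
  have hP := measurable_pn n m
  have hms : MeasurableSet {y : Eu (n + 1 + m) | pn n m y = ρ} := hP (measurableSet_singleton ρ)
  have h1 : volume {y : Eu (n + 1 + m) | pn n m y = ρ} = 0 := by
    rw [← lintegral_indicator_one hms, lintegral_glue (n + 1) m _ (measurable_one.indicator hms)]
    have : ∀ᵐ a : Eu (n + 1), ∫⁻ b : Eu m,
        {y : Eu (n + 1 + m) | pn n m y = ρ}.indicator (1 : Eu (n + 1 + m) → ℝ≥0∞) (glue (n + 1) m (a, b)) = 0 := by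
      have h2 : ∀ᵐ a : Eu (n + 1), a ∉ Metric.sphere (0 : Eu (n + 1)) ρ :=
        measure_eq_zero_iff_ae_notMem.1 (Measure.addHaar_sphere _ _ _)
      filter_upwards [h2] with a ha
      have : ∀ b : Eu m, {y : Eu (n + 1 + m) | pn n m y = ρ}.indicator (1 : Eu (n + 1 + m) → ℝ≥0∞) (glue (n + 1) m (a, b)) = 0 := by
        intro b
        apply indicator_of_notMem
        simp only [mem_ofPred_eq, pn, pnorm_glue]
        simpa using ha
      simp [this]
    rw [lintegral_congr_ae this, lintegral_zero]
  exact measure_eq_zero_iff_ae_notMem.1 h1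

/-- The symmetrised integrand is a function of `|y_k| / |x_k|` times `|x - y|^(-d-2s)`. -/
lemma hkern_symmetrise (n m : ℕ) (s a b : ℝ) {S : Set ℝ} (c : ℝ) (hc : 0 ≤ c)
    (φ : ℝ → ℝ) (hφ0 : ∀ r, 0 ≤ r → 0 ≤ φ r) (x y : Eu (n + 1 + m)) (hx : 0 < pn n m x) :
    (invHull S).indicator (1 : ℝ → ℝ≥0∞) (pn n m y / pn n m x) *
      ENNReal.ofReal (c * φ (pn n m y / pn n m x) * hkern n m s a b x y) +
      (invHull S).indicator (1 : ℝ → ℝ≥0∞) (pn n m x / pn n m y) *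
      ENNReal.ofReal (c * φ (pn n m y / pn n m x) * hkern n m s a b y x) =
      ENNReal.ofReal (c * pn n m x ^ (a + b)) *
        ((invHull S).indicator (fun r ↦ ENNReal.ofReal (φ r * (r ^ a + r ^ b))) (pn n m y / pn n m x) *
        ENNReal.ofReal (‖x - y‖ ^ (-((n + 1 + m : ℕ) : ℝ) - 2 * s))) := by
  have hk0 := hkern_nonneg n m s a b
  have h1 := ind_inv (S := S) (pn n m y / pn n m x)
  rw [inv_div] at h1
  rw [h1]
  have hy := pn_nonneg n m y
  set q := pn n m y / pn n m x with hq
  have hq0 : 0 ≤ q := div_nonneg hy hx.le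
  by_cases hmem : q ∈ invHull S
  · rw [indicator_of_mem hmem, indicator_of_mem hmem, Pi.one_apply, one_mul, one_mul,
      ← ENNReal.ofReal_add, ← ENNReal.ofReal_mul, ← ENNReal.ofReal_mul]
    · congr 1
      have e1 : pn n m y = q * pn n m x := by rw [hq]; field_simp
      unfold hkern
      rw [norm_sub_rev y x, e1, Real.mul_rpow hq0 hx.le, Real.mul_rpow hq0 hx.le, Real.rpow_add hx]
      ring
    · exact mul_nonneg hc (Real.rpow_nonneg hx.le _)
    · exact mul_nonneg (hφ0 q hq0) (by positivity)
    · exact mul_nonneg (mul_nonneg hc (hφ0 _ hq0)) (hk0 _ _)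
    · exact mul_nonneg (mul_nonneg hc (hφ0 _ hq0)) (hk0 _ _)
  · rw [indicator_of_notMem hmem, indicator_of_notMem hmem]; simp

/-- Diagonal terms of the truncated energies. Exchanging `x` and `y` in one half symmetrises the
kernel, and the `y` integral then depends on `x` only through a power of `|x_k|`. -/
lemma tr_diag (n m : ℕ) (s a b : ℝ) (hs : 0 < s) {S : Set ℝ} (hS : MeasurableSet S)
    (U : Eu (n + 1 + m) → ℝ) (hU : Measurable U) (hU0 : ∀ x, 0 ≤ U x)
    (φ : ℝ → ℝ) (hφ : Measurable φ) (hφ0 : ∀ r, 0 ≤ r → 0 ≤ φ r) :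
    tr n m S (fun x y ↦ (U x * φ (pn n m y / pn n m x) + U y * φ (pn n m x / pn n m y)) *
        hkern n m s a b x y) =
      ENNReal.ofReal (cst (n + 1) m s) *
        (∫⁻ r in Ioi (0 : ℝ), (invHull S).indicator (fun r ↦ ENNReal.ofReal (φ r * (r ^ a + r ^ b))) r *
          (ENNReal.ofReal (r ^ n) * Psi (n + 1) s r)) *
        ∫⁻ x, ENNReal.ofReal (U x * pn n m x ^ (a + b - 2 * s)) := by
  have hI := measurable_ind hS
  have hP := measurable_pn n m
  have hP0 := pn_nonneg n m
  have hk := measurable_hkern n m s a b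
  have hk0 := hkern_nonneg n m s a b
  simp_rw [add_mul]
  have hm2 : Measurable (Function.uncurry fun x y : Eu (n + 1 + m) ↦
      (invHull S).indicator (1 : ℝ → ℝ≥0∞) (pn n m y / pn n m x) *
      ENNReal.ofReal (U y * φ (pn n m x / pn n m y) * hkern n m s a b x y)) := by
    unfold Function.uncurry at hk ⊢
    fun_prop
  have hm1 : Measurable (Function.uncurry fun x y : Eu (n + 1 + m) ↦
      (U x * φ (pn n m y / pn n m x) * hkern n m s a b x y)) := by
    unfold Function.uncurry at hk ⊢
    fun_prop
  rw [tr_add n m hS _ _ hm1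
    (fun x y ↦ mul_nonneg (mul_nonneg (hU0 x) (hφ0 _ (div_nonneg (hP0 _) (hP0 _)))) (hk0 _ _))
    (fun x y ↦ mul_nonneg (mul_nonneg (hU0 y) (hφ0 _ (div_nonneg (hP0 _) (hP0 _)))) (hk0 _ _))]
  have hm1' : Measurable (Function.uncurry fun x y : Eu (n + 1 + m) ↦
      (invHull S).indicator (1 : ℝ → ℝ≥0∞) (pn n m y / pn n m x) *
      ENNReal.ofReal (U x * φ (pn n m y / pn n m x) * hkern n m s a b x y)) := by
    unfold Function.uncurry at hk ⊢
    fun_prop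
  set g : ℝ → ℝ≥0∞ := (invHull S).indicator (fun r ↦ ENNReal.ofReal (φ r * (r ^ a + r ^ b))) with hg
  have hgm : Measurable g := Measurable.indicator (by fun_prop) (measurableSet_invHull hS)
  set J := ∫⁻ r in Ioi (0 : ℝ), g r * (ENNReal.ofReal (r ^ n) * Psi (n + 1) s r) with hJ
  unfold tr
  have hUm : Measurable fun x ↦ ENNReal.ofReal (U x * pn n m x ^ (a + b - 2 * s)) := by fun_prop
  rw [lintegral_lintegral_swap hm2.aemeasurable, ← lintegral_const_mul _ hUm]
  refine (lintegral_add_left hm1'.lintegral_prod_right _).symm.trans ?_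
  have hae : ∀ᵐ x : Eu (n + 1 + m), 0 < pn n m x :=
    (ae_pn_ne n m 0).mono fun x hx ↦ lt_of_le_of_ne (hP0 x) (Ne.symm hx)
  refine lintegral_congr_ae (hae.mono fun x hx ↦ ?_)
  have hmx : Measurable fun y ↦ (invHull S).indicator (1 : ℝ → ℝ≥0∞) (pn n m y / pn n m x) *
      ENNReal.ofReal (U x * φ (pn n m y / pn n m x) * hkern n m s a b x y) :=
    hm1'.of_uncurry_left
  refine (lintegral_add_left hmx _).symm.trans ?_
  refine (lintegral_congr fun y ↦ hkern_symmetrise n m s a b (U x) (hU0 x) φ hφ0 x y hx).trans ?_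
  rw [← hg, lintegral_const_mul' _ _ ENNReal.ofReal_ne_top, lintegral_kernel n m s hs x hx g hgm, ← hJ]
  have e2 : U x * pn n m x ^ (a + b - 2 * s) = U x * pn n m x ^ (a + b) * pn n m x ^ (-(2 * s)) := by
    rw [mul_assoc, ← Real.rpow_add hx]; congr 2
  beta_reduce
  rw [e2, ENNReal.ofReal_mul (mul_nonneg (hU0 x) (Real.rpow_nonneg hx.le _))]
  ring

/-- The Hardy integral `∫ |u|² |x_k|^(α+β-2s)`. -/
def hardy (n m : ℕ) (s a b : ℝ) (u : Eu (n + 1 + m) → ℝ) : ℝ≥0∞ :=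
  ∫⁻ x, ENNReal.ofReal (u x ^ 2 * pn n m x ^ (a + b - 2 * s))

lemma tr_mono (n m : ℕ) {S : Set ℝ} (f g : Eu (n + 1 + m) → Eu (n + 1 + m) → ℝ)
    (h : ∀ x y, pn n m y / pn n m x ∈ invHull S → f x y ≤ g x y) : tr n m S f ≤ tr n m S g := by
  refine lintegral_mono fun x ↦ lintegral_mono fun y ↦ ?_
  by_cases hm : pn n m y / pn n m x ∈ invHull S
  · simp only
    gcongr
    exact h x y hm
  · simp [hm]

lemma tr_congr (n m : ℕ) {S : Set ℝ} (f g : Eu (n + 1 + m) → Eu (n + 1 + m) → ℝ)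
    (h : ∀ x y, pn n m y / pn n m x ∈ invHull S → f x y = g x y) : tr n m S f = tr n m S g :=
  le_antisymm (tr_mono n m f g fun x y hm ↦ (h x y hm).le) (tr_mono n m g f fun x y hm ↦ (h x y hm).ge)

/-- Away from equal ratios the energy is dominated by its diagonal terms, as
`|u x - u y|² ≤ 2 |u x|² + 2 |u y|²`. -/
lemma tr_en_lt_top (n m : ℕ) (s a b : ℝ) (hs : 0 < s) {S : Set ℝ} (hS : MeasurableSet S)
    (u : Eu (n + 1 + m) → ℝ) (hu : Measurable u) (hH : hardy n m s a b u < ∞)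
    (hA : coefA n s a b S < ∞) : tr n m S (en n m s a b u) < ∞ := by
  have h1 := tr_diag n m s a b hs hS (fun x ↦ 2 * u x ^ 2) (by fun_prop) (fun x ↦ by positivity)
    (fun _ ↦ 1) measurable_const (fun _ _ ↦ zero_le_one)
  refine (tr_mono n m _ (fun x y ↦ (2 * u x ^ 2 * 1 + 2 * u y ^ 2 * 1) * hkern n m s a b x y) ?_).trans_lt ?_
  · intro x y _
    unfold en
    gcongr
    · exact hkern_nonneg ..
    · rw [Real.rpow_two, sq_abs]; nlinarith [sq_nonneg (u x + u y)]
  · rw [h1]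
    simp only [one_mul]
    refine ENNReal.mul_lt_top (ENNReal.mul_lt_top ENNReal.ofReal_lt_top hA) ?_
    have : ∀ x, ENNReal.ofReal (2 * u x ^ 2 * pn n m x ^ (a + b - 2 * s)) =
        ENNReal.ofReal 2 * ENNReal.ofReal (u x ^ 2 * pn n m x ^ (a + b - 2 * s)) := by
      intro x
      rw [← ENNReal.ofReal_mul (by norm_num), mul_assoc]
    simp_rw [this]
    rw [lintegral_const_mul' _ _ ENNReal.ofReal_ne_top]
    exact ENNReal.mul_lt_top ENNReal.ofReal_lt_top hH

/-- The identity with the ratios `|y_k|/|x_k|` kept away from `1`, where every term is finite. -/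
lemma tr_identity (n m : ℕ) (s a b : ℝ) (hs : 0 < s) {S : Set ℝ} (hS : MeasurableSet S)
    (hS1 : S ⊆ Ioo 0 1)
    (u v : Eu (n + 1 + m) → ℝ) (hu : Measurable u) (hH : hardy n m s a b u < ∞)
    (hA : coefA n s a b S < ∞)
    (hv : ∀ x, v x = pn n m x ^ (((n + 1 : ℕ) + a + b - 2 * s) / 2) * u x) :
    tr n m S (en n m s a b u) =
      tr n m S (en n m s (-(((n + 1 : ℕ) - a + b - 2 * s) / 2)) (-(((n + 1 : ℕ) + a - b - 2 * s) / 2)) v) +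
        ENNReal.ofReal (cst (n + 1) m s) * coefC n s a b S * hardy n m s a b u := by
  have hP := measurable_pn n m
  have hP0 := pn_nonneg n m
  have hvm : Measurable v := by
    rw [show v = _ from funext hv]; fun_prop
  set g := ((n + 1 : ℕ) + a + b - 2 * s) / 2 with hg
  have hB := tr_diag n m s a b hs hS (fun x ↦ u x ^ 2) (by fun_prop) (fun x ↦ by positivity)
    (fun r ↦ r ^ (-g)) (by fun_prop) (fun r hr ↦ by positivity)
  have hA' := tr_diag n m s a b hs hS (fun x ↦ u x ^ 2) (by fun_prop) (fun x ↦ by positivity)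
    (fun _ ↦ 1) measurable_const (fun _ _ ↦ zero_le_one)
  have hadd1 := tr_add n m hS _ (fun x y ↦ (u x ^ 2 * (pn n m y / pn n m x) ^ (-g) +
      u y ^ 2 * (pn n m x / pn n m y) ^ (-g)) * hkern n m s a b x y) (measurable_en n m s a b u hu)
    (en_nonneg n m s a b u) (fun x y ↦ mul_nonneg (by have := hP0 x; have := hP0 y; positivity) (hkern_nonneg ..))
  have hadd2 := tr_add n m hS _ (fun x y ↦ (u x ^ 2 * 1 + u y ^ 2 * 1) * hkern n m s a b x y)
    (measurable_en n m s (-(((n + 1 : ℕ) - a + b - 2 * s) / 2)) (-(((n + 1 : ℕ) + a - b - 2 * s) / 2)) v hvm)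
    (en_nonneg n m s _ _ v) (fun x y ↦ mul_nonneg (by positivity) (hkern_nonneg ..))
  rw [hB] at hadd1
  rw [hA'] at hadd2
  simp only [one_mul] at hadd2
  change _ = _ + ENNReal.ofReal (cst (n + 1) m s) * coefA n s a b S * hardy n m s a b u at hadd2
  change _ = _ + ENNReal.ofReal (cst (n + 1) m s) * coefB n s a b S * hardy n m s a b u at hadd1
  rw [coef_eq n s a b hS hS1] at hadd2 hA
  have hfin : ENNReal.ofReal (cst (n + 1) m s) * coefB n s a b S * hardy n m s a b u ≠ ∞ :=
    (ENNReal.mul_lt_top (ENNReal.mul_lt_top ENNReal.ofReal_lt_top (ENNReal.add_lt_top.1 hA).1) hH).ne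
  -- add the finite diagonal terms to both sides; the integrands then agree pointwise
  rw [← ENNReal.add_left_inj hfin, ← hadd1]
  have hre : ∀ E c B C H : ℝ≥0∞, E + c * C * H + c * B * H = E + c * (B + C) * H := by
    intros; ring
  rw [hre, ← hadd2]
  refine tr_congr n m _ _ fun x y hm ↦ ?_
  obtain ⟨hx, hy⟩ := pos_of_mem_invHull hS1 (hP0 x) (hP0 y) hm
  unfold en hkern
  rw [hv x, hv y]
  simp only [Real.rpow_two, sq_abs]
  set p := pn n m x
  set q := pn n m y
  have e1 : -(((n + 1 : ℕ) - a + b - 2 * s) / 2) = a - g := by rw [hg]; ring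
  have e2 : -(((n + 1 : ℕ) + a - b - 2 * s) / 2) = b - g := by rw [hg]; ring
  have hp := Real.rpow_pos_of_pos hx g
  have hq := Real.rpow_pos_of_pos hy g
  rw [e1, e2, Real.div_rpow hy.le hx.le, Real.div_rpow hx.le hy.le, Real.rpow_neg hx.le,
    Real.rpow_neg hy.le, Real.rpow_sub hx, Real.rpow_sub hy]
  field_simp
  ring

/-! ### Removing the truncation -/

/-- The ratios `r < 1` kept at distance `1 / (j + 2)` from `1`. -/
def cut (j : ℕ) : Set ℝ := Ioc 0 (1 - 1 / ((j : ℝ) + 2))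

lemma measurableSet_cut (j : ℕ) : MeasurableSet (cut j) := measurableSet_Ioc

lemma cut_end_lt (j : ℕ) : 1 - 1 / ((j : ℝ) + 2) < 1 := by
  have : 0 < 1 / ((j : ℝ) + 2) := by positivity
  linarith

lemma cut_subset (j : ℕ) : cut j ⊆ Ioo 0 1 := fun _ hr ↦ ⟨hr.1, hr.2.trans_lt (cut_end_lt j)⟩

lemma cut_mono : Monotone cut := by
  intro i j hij r hr
  refine ⟨hr.1, hr.2.trans ?_⟩
  have : (i : ℝ) ≤ j := by exact_mod_cast hij
  gcongr

lemma exists_mem_cut {r : ℝ} (hr : r ∈ Ioo (0 : ℝ) 1) : ∃ j, r ∈ cut j := by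
  obtain ⟨j, hj⟩ := exists_nat_one_div_lt (sub_pos.2 hr.2)
  refine ⟨j, hr.1, ?_⟩
  have : 1 / ((j : ℝ) + 2) ≤ 1 / ((j : ℝ) + 1) := by gcongr; norm_num
  linarith

lemma invHull_mono {S T : Set ℝ} (h : S ⊆ T) : invHull S ⊆ invHull T :=
  fun _ hr ↦ hr.imp (fun h' ↦ h h') (fun h' ↦ h h')

lemma mem_invHull_Ioo {p q : ℝ} (hp : 0 < p) (hq : 0 < q) (hne : q ≠ p) :
    q / p ∈ invHull (Ioo 0 1) := by
  rcases hne.lt_or_gt with h | h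
  · exact Or.inl ⟨by positivity, (div_lt_one hp).2 h⟩
  · exact Or.inr ⟨by positivity, by rw [inv_div]; exact (div_lt_one hq).2 h⟩

/-- The double integral of `f` over all pairs. -/
def full (n m : ℕ) (f : Eu (n + 1 + m) → Eu (n + 1 + m) → ℝ) : ℝ≥0∞ :=
  ∫⁻ x, ∫⁻ y, ENNReal.ofReal (f x y)

lemma tr_mono_set (n m : ℕ) {S T : Set ℝ} (h : S ⊆ T) (f : Eu (n + 1 + m) → Eu (n + 1 + m) → ℝ) :
    tr n m S f ≤ tr n m T f := by
  refine lintegral_mono fun x ↦ lintegral_mono fun y ↦ ?_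
  dsimp only
  gcongr
  exact invHull_mono h

lemma full_eq_iSup (n m : ℕ) (f : Eu (n + 1 + m) → Eu (n + 1 + m) → ℝ)
    (hf : Measurable (Function.uncurry f)) : full n m f = ⨆ j, tr n m (cut j) f := by
  have hP := measurable_pn n m
  have hI := fun j ↦ measurable_ind (measurableSet_cut j)
  have hm : ∀ j, Measurable (Function.uncurry fun x y : Eu (n + 1 + m) ↦
      (invHull (cut j)).indicator (1 : ℝ → ℝ≥0∞) (pn n m y / pn n m x) * ENNReal.ofReal (f x y)) := by
    intro j
    have := hI j
    unfold Function.uncurry at hf ⊢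
    fun_prop
  have hmon : ∀ x y : Eu (n + 1 + m), Monotone fun j ↦
      (invHull (cut j)).indicator (1 : ℝ → ℝ≥0∞) (pn n m y / pn n m x) * ENNReal.ofReal (f x y) := by
    intro x y i j hij
    dsimp only
    gcongr
    exact invHull_mono (cut_mono hij)
  unfold full tr
  rw [← lintegral_iSup (fun j ↦ (hm j).lintegral_prod_right)
    (fun i j hij x ↦ lintegral_mono fun y ↦ hmon x y hij)]
  have hae : ∀ᵐ x : Eu (n + 1 + m), 0 < pn n m x :=
    (ae_pn_ne n m 0).mono fun x hx ↦ lt_of_le_of_ne (pn_nonneg n m x) (Ne.symm hx)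
  refine lintegral_congr_ae (hae.mono fun x hx ↦ ?_)
  dsimp only
  rw [← lintegral_iSup (fun j ↦ (hm j).of_uncurry_left) (fun i j hij y ↦ hmon x y hij)]
  refine lintegral_congr_ae ((hae.and (ae_pn_ne n m (pn n m x))).mono fun y hy ↦ ?_)
  dsimp only
  refine le_antisymm ?_ (iSup_le fun j ↦ ?_)
  · obtain ⟨j, hj⟩ : ∃ j, pn n m y / pn n m x ∈ invHull (cut j) := by
      rcases mem_invHull_Ioo hx hy.1 hy.2 with h | h
      · exact (exists_mem_cut h).imp fun j h' ↦ Or.inl h'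
      · exact (exists_mem_cut h).imp fun j h' ↦ Or.inr h'
    refine le_iSup_of_le j ?_
    rw [indicator_of_mem hj]; simp
  · refine mul_le_of_le_one_left' (indicator_le_self' (fun _ _ ↦ bot_le) _ |>.trans ?_)
    simp

lemma coefC_eq_iSup (n : ℕ) (s a b : ℝ) : coefC n s a b (Ioo 0 1) = ⨆ j, coefC n s a b (cut j) := by
  have h : Ioo (0 : ℝ) 1 = ⋃ j, cut j := by
    ext r
    simp only [mem_iUnion]
    exact ⟨exists_mem_cut, fun ⟨j, hj⟩ ↦ cut_subset j hj⟩
  unfold coefC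
  rw [h, setLIntegral_iUnion_of_directed _ (directed_of_isDirected_le cut_mono)]

/-- The Hardy identity in `[0, ∞]`. -/
lemma full_identity (n m : ℕ) (s a b : ℝ) (hs : 0 < s) (ha : a ∈ Ioo (-((n + 1 : ℕ) : ℝ)) (2 * s))
    (hb : b ∈ Ioo (-((n + 1 : ℕ) : ℝ)) (2 * s))
    (u v : Eu (n + 1 + m) → ℝ) (hu : Measurable u) (hH : hardy n m s a b u < ∞)
    (hv : ∀ x, v x = pn n m x ^ (((n + 1 : ℕ) + a + b - 2 * s) / 2) * u x) :
    full n m (en n m s a b u) =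
      full n m (en n m s (-(((n + 1 : ℕ) - a + b - 2 * s) / 2)) (-(((n + 1 : ℕ) + a - b - 2 * s) / 2)) v) +
        ENNReal.ofReal (cst (n + 1) m s) * coefC n s a b (Ioo 0 1) * hardy n m s a b u := by
  have hP := measurable_pn n m
  have hvm : Measurable v := by
    rw [show v = _ from funext hv]; fun_prop
  rw [full_eq_iSup n m _ (measurable_en n m s a b u hu), full_eq_iSup n m _ (measurable_en n m s _ _ v hvm),
    coefC_eq_iSup, ENNReal.mul_iSup, ENNReal.iSup_mul, ENNReal.iSup_add_iSup_of_monotone]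
  · refine iSup_congr fun j ↦ ?_
    exact tr_identity n m s a b hs (measurableSet_cut j) (cut_subset j) u v hu hH
      (coefA_lt_top n s a b hs ha hb _ (cut_end_lt j)) hv
  · exact fun i j hij ↦ tr_mono_set n m (cut_mono hij) _
  · intro i j hij
    dsimp only
    gcongr
    exact lintegral_mono_set (cut_mono hij)

/-! ### Finiteness of the Hardy integral and of the energy -/

/-- Powers of `|x_k|` above `-k` are locally integrable. -/
lemma lintegral_pn_rpow_lt_top (n m : ℕ) (τ R : ℝ) (hτ : -((n + 1 : ℕ) : ℝ) < τ) (hR : 0 < R) :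
    ∫⁻ x in Metric.ball (0 : Eu (n + 1 + m)) R, ENNReal.ofReal (pn n m x ^ τ) < ∞ := by
  have hP := measurable_pn n m
  rw [← lintegral_indicator measurableSet_ball,
    lintegral_glue _ _ _ (Measurable.indicator (by fun_prop) measurableSet_ball)]
  set f : ℝ → ℝ≥0∞ := (Iio R).indicator fun r ↦ ENNReal.ofReal (r ^ τ) with hf
  have hfm : Measurable f := Measurable.indicator (by fun_prop) measurableSet_Iio
  set g : Eu m → ℝ≥0∞ := (Metric.ball 0 R).indicator 1 with hg
  have hle : ∀ (a : Eu (n + 1)) (b : Eu m), (Metric.ball (0 : Eu (n + 1 + m)) R).indicator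
      (fun x ↦ ENNReal.ofReal (pn n m x ^ τ)) (glue (n + 1) m (a, b)) ≤ f ‖a‖ * g b := by
    intro a b
    by_cases h : glue (n + 1) m (a, b) ∈ Metric.ball (0 : Eu (n + 1 + m)) R
    · have h' := h
      rw [mem_ball_zero_iff, norm_glue] at h'
      have h1 : ‖a‖ < R := (Real.le_sqrt_of_sq_le (by nlinarith [sq_nonneg ‖b‖])).trans_lt h'
      have h2 : ‖b‖ < R := (Real.le_sqrt_of_sq_le (by nlinarith [sq_nonneg ‖a‖])).trans_lt h'
      rw [indicator_of_mem h, hf, hg, indicator_of_mem (show ‖a‖ ∈ Iio R from h1),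
        indicator_of_mem (by simpa using h2), pn, pnorm_glue]
      simp
    · rw [indicator_of_notMem h]; exact bot_le
  refine (lintegral_mono fun a ↦ lintegral_mono fun b ↦ hle a b).trans_lt ?_
  have hgf : ∫⁻ b, g b < ∞ := by
    rw [hg, lintegral_indicator_one measurableSet_ball]
    exact measure_ball_lt_top
  have e : ∀ a : Eu (n + 1), ∫⁻ b, f ‖a‖ * g b = f ‖a‖ * ∫⁻ b, g b := fun a ↦
    lintegral_const_mul _ (measurable_one.indicator measurableSet_ball)
  simp_rw [e]
  rw [lintegral_mul_const _ (by fun_prop), lintegral_radial n f hfm]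
  refine ENNReal.mul_lt_top (ENNReal.mul_lt_top ENNReal.ofReal_lt_top ?_) hgf
  push_cast at hτ
  refine lt_of_le_of_lt (le_of_eq ?_) (lintegral_rpow_lt_top (n + τ) R (by linarith) hR)
  have e2 : ∀ r, ENNReal.ofReal (r ^ n) * f r =
      (Iio R).indicator (fun r ↦ ENNReal.ofReal (r ^ n) * ENNReal.ofReal (r ^ τ)) r := by
    intro r
    by_cases hr : r ∈ Iio R <;> simp [hf, hr]
  simp_rw [e2]
  rw [setLIntegral_indicator measurableSet_Iio, Iio_inter_Ioi]
  refine setLIntegral_congr_fun measurableSet_Ioo fun r hr ↦ ?_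
  have hr : 0 < r := hr.1
  rw [← ENNReal.ofReal_mul (by positivity), ← Real.rpow_natCast, ← Real.rpow_add hr]

/-- Near the diagonal `|u x - u y|²` gains two powers of `|x - y|`, far from it the kernel decays. -/
lemma lintegral_Q_lt_top (d : ℕ) (hd : 1 ≤ d) (s A B : ℝ) (hs : s ∈ Ioo (0 : ℝ) 1) (hA : 0 ≤ A)
    (hB : 0 ≤ B) :
    ∫⁻ z : Eu d, ENNReal.ofReal (min (A * ‖z‖ ^ 2) B * ‖z‖ ^ (-(d : ℝ) - 2 * s)) < ∞ := by
  obtain ⟨N, rfl⟩ : ∃ N, d = N + 1 := ⟨d - 1, by omega⟩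
  obtain ⟨hs0, hs1⟩ := hs
  rw [lintegral_radial N (fun r ↦ ENNReal.ofReal (min (A * r ^ 2) B * r ^ (-((N + 1 : ℕ) : ℝ) - 2 * s)))
    (by fun_prop)]
  refine ENNReal.mul_lt_top ENNReal.ofReal_lt_top ?_
  rw [← Ioc_union_Ioi_eq_Ioi (zero_le_one' ℝ), lintegral_union measurableSet_Ioi
    (Set.disjoint_left.2 fun x hx hx' ↦ not_lt.2 hx.2 hx'), setLIntegral_congr Ioo_ae_eq_Ioc.symm]
  refine ENNReal.add_lt_top.2 ⟨?_, ?_⟩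
  · have : ∀ r ∈ Ioo (0 : ℝ) 1, ENNReal.ofReal (r ^ N) * ENNReal.ofReal
        (min (A * r ^ 2) B * r ^ (-((N + 1 : ℕ) : ℝ) - 2 * s)) ≤
        ENNReal.ofReal A * ENNReal.ofReal (r ^ (1 - 2 * s)) := by
      intro r hr
      have hr : 0 < r := hr.1
      rw [← ENNReal.ofReal_mul (by positivity), ← ENNReal.ofReal_mul (by positivity)]
      apply ENNReal.ofReal_le_ofReal
      have : r ^ (1 - 2 * s) = r ^ N * (r ^ 2 * r ^ (-((N + 1 : ℕ) : ℝ) - 2 * s)) := by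
        rw [← Real.rpow_natCast, ← Real.rpow_natCast, ← Real.rpow_add hr, ← Real.rpow_add hr]
        congr 1; push_cast; ring
      rw [this]
      calc _ ≤ r ^ N * (A * r ^ 2 * r ^ (-((N + 1 : ℕ) : ℝ) - 2 * s)) := by
            gcongr; exact min_le_left _ _
        _ = _ := by ring
    refine (setLIntegral_mono (by fun_prop) this).trans_lt ?_
    rw [lintegral_const_mul' _ _ ENNReal.ofReal_ne_top]
    exact ENNReal.mul_lt_top ENNReal.ofReal_lt_top (lintegral_rpow_lt_top _ _ (by linarith) one_pos)
  · have : ∀ r ∈ Ioi (1 : ℝ), ENNReal.ofReal (r ^ N) * ENNReal.ofReal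
        (min (A * r ^ 2) B * r ^ (-((N + 1 : ℕ) : ℝ) - 2 * s)) ≤
        ENNReal.ofReal B * ENNReal.ofReal (r ^ (-1 - 2 * s)) := by
      intro r hr
      have hr : 0 < r := one_pos.trans hr
      rw [← ENNReal.ofReal_mul (by positivity), ← ENNReal.ofReal_mul (by positivity)]
      apply ENNReal.ofReal_le_ofReal
      have : r ^ (-1 - 2 * s) = r ^ N * r ^ (-((N + 1 : ℕ) : ℝ) - 2 * s) := by
        rw [← Real.rpow_natCast, ← Real.rpow_add hr]
        congr 1; push_cast; ring
      rw [this]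
      calc _ ≤ r ^ N * (B * r ^ (-((N + 1 : ℕ) : ℝ) - 2 * s)) := by
            gcongr; exact min_le_right _ _
        _ = _ := by ring
    refine (setLIntegral_mono (by fun_prop) this).trans_lt ?_
    rw [lintegral_const_mul' _ _ ENNReal.ofReal_ne_top]
    exact ENNReal.mul_lt_top ENNReal.ofReal_lt_top
      (Integrable.lintegral_lt_top (integrableOn_Ioi_rpow_of_lt (by linarith) one_pos))

lemma exists_ball (n m : ℕ) (u : Eu (n + 1 + m) → ℝ) (husupp : HasCompactSupport u) :
    ∃ R, 0 < R ∧ ∀ x, x ∉ Metric.ball (0 : Eu (n + 1 + m)) R → u x = 0 := by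
  obtain ⟨R, hR, hsub⟩ := husupp.isCompact.isBounded.subset_ball_lt 0 0
  exact ⟨R, hR, fun x hx ↦ image_eq_zero_of_notMem_tsupport fun h ↦ hx (hsub h)⟩

lemma continuous_pn (n m : ℕ) : Continuous (pn n m) := by
  unfold pn pnorm
  refine (continuous_finsetSum _ fun i _ ↦ ?_).sqrt
  split_ifs <;> fun_prop

/-- For `2s < k + α + β` the weight is locally integrable; otherwise `|x_k|` is bounded below on the
support of `u`. -/
lemma hardy_lt_top (n m : ℕ) (s a b : ℝ) (u : Eu (n + 1 + m) → ℝ)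
    (hu : Continuous u) (husupp : HasCompactSupport u)
    (hab : a + b < 2 * s)
    (hcase : 2 * s < ((n + 1 : ℕ) : ℝ) + a + b ∨ (∀ x, pn n m x = 0 → x ∉ tsupport u)) :
    hardy n m s a b u < ∞ := by
  obtain ⟨R, hR, hball⟩ := exists_ball n m u husupp
  obtain ⟨M, hM⟩ := husupp.exists_bound_of_continuous hu
  have hM2 : ∀ x, u x ^ 2 ≤ M ^ 2 := fun x ↦ by
    rw [← sq_abs (u x)]; exact pow_le_pow_left₀ (abs_nonneg _) (hM x) 2
  -- in both cases `|x_k|^(α+β-2s)` is dominated on the support by an integrable power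
  obtain ⟨C, τ, hτ, hC⟩ : ∃ C τ : ℝ, -((n + 1 : ℕ) : ℝ) < τ ∧
      ∀ x, u x ^ 2 * pn n m x ^ (a + b - 2 * s) ≤ C * pn n m x ^ τ := by
    rcases hcase with h | h
    · refine ⟨M ^ 2, a + b - 2 * s, by linarith, fun x ↦ ?_⟩
      have := pn_nonneg n m x
      have := hM2 x
      gcongr
    · obtain ⟨ε, hε, hεx⟩ := husupp.isCompact.exists_forall_le' (continuous_pn n m).continuousOn
        (a := 0) (fun x hx ↦ lt_of_le_of_ne (pn_nonneg n m x) fun h0 ↦ h x h0.symm hx)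
      refine ⟨M ^ 2 * ε ^ (a + b - 2 * s), 0, by push_cast; linarith [(Nat.cast_nonneg n : (0 : ℝ) ≤ n)], fun x ↦ ?_⟩
      rw [Real.rpow_zero, mul_one]
      by_cases hx : x ∈ tsupport u
      · exact mul_le_mul (hM2 x) (Real.rpow_le_rpow_of_nonpos hε (hεx x hx) (by linarith))
          (Real.rpow_nonneg (pn_nonneg n m x) _) (sq_nonneg _)
      · rw [image_eq_zero_of_notMem_tsupport hx]
        simp only [ne_eq, OfNat.ofNat_ne_zero, not_false_eq_true, zero_pow, zero_mul]
        positivity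
  have key : ∀ x, ENNReal.ofReal (u x ^ 2 * pn n m x ^ (a + b - 2 * s)) ≤
      (Metric.ball (0 : Eu (n + 1 + m)) R).indicator
        (fun x ↦ ENNReal.ofReal (max C 0) * ENNReal.ofReal (pn n m x ^ τ)) x := by
    intro x
    by_cases hx : x ∈ Metric.ball (0 : Eu (n + 1 + m)) R
    · rw [indicator_of_mem hx, ← ENNReal.ofReal_mul (le_max_right _ _)]
      refine ENNReal.ofReal_le_ofReal ((hC x).trans ?_)
      have := pn_nonneg n m x
      gcongr
      exact le_max_left _ _
    · rw [hball x hx]; simp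
  refine (lintegral_mono key).trans_lt ?_
  rw [lintegral_indicator measurableSet_ball, lintegral_const_mul' _ _ ENNReal.ofReal_ne_top]
  exact ENNReal.mul_lt_top ENNReal.ofReal_lt_top (lintegral_pn_rpow_lt_top n m τ R hτ hR)

/-- Comparable positive numbers have comparable powers. -/
lemma rpow_le_of_comparable (p q c : ℝ) (hp : 0 < p) (h1 : q ≤ 2 * p) (h2 : p ≤ 2 * q) :
    q ^ c ≤ 2 ^ |c| * p ^ c := by
  have hq : 0 < q := by linarith
  rcases le_total 0 c with h | h
  · rw [abs_of_nonneg h, ← Real.mul_rpow (by norm_num) hp.le]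
    exact Real.rpow_le_rpow hq.le h1 h
  · rw [abs_of_nonpos h]
    have : p ^ (-c) ≤ 2 ^ (-c) * q ^ (-c) := by
      rw [← Real.mul_rpow (by norm_num) hq.le]
      exact Real.rpow_le_rpow hp.le h2 (by linarith)
    rw [Real.rpow_neg hp.le, Real.rpow_neg hq.le] at this
    have hp' : 0 < p ^ c := by positivity
    have hq' : 0 < q ^ c := by positivity
    rw [inv_le_iff_one_le_mul₀ hp'] at this
    have h3 : 2 ^ (-c) * (q ^ c)⁻¹ * p ^ c = 2 ^ (-c) * p ^ c / q ^ c := by ring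
    rw [mul_comm] at this
    rw [mul_comm, h3, one_le_div hq'] at this
    exact this

/-- The energy of a compactly supported `C¹` function is finite: pairs with ratio outside
`(1/2, 2)` are controlled by the Hardy integral, and for the remaining ones the weights are
comparable, which leaves the unweighted energy density near the support. -/
lemma full_en_lt_top (n m : ℕ) (s a b : ℝ) (hs : s ∈ Ioo (0 : ℝ) 1)
    (ha : a ∈ Ioo (-((n + 1 : ℕ) : ℝ)) (2 * s)) (hb : b ∈ Ioo (-((n + 1 : ℕ) : ℝ)) (2 * s))
    (hab : -((n + 1 : ℕ) : ℝ) < a + b) (u : Eu (n + 1 + m) → ℝ)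
    (hu : ContDiff ℝ 1 u) (husupp : HasCompactSupport u) (hH : hardy n m s a b u < ∞) :
    full n m (en n m s a b u) < ∞ := by
  have hP := measurable_pn n m
  obtain ⟨R, hR, hball⟩ := exists_ball n m u husupp
  obtain ⟨M, hM⟩ := husupp.exists_bound_of_continuous hu.continuous
  obtain ⟨L, hL⟩ := hu.lipschitzWith_of_hasCompactSupport husupp one_ne_zero
  set Q : Eu (n + 1 + m) → ℝ≥0∞ := fun z ↦ ENNReal.ofReal
    (min ((L : ℝ) ^ 2 * ‖z‖ ^ 2) ((2 * M) ^ 2) * ‖z‖ ^ (-((n + 1 + m : ℕ) : ℝ) - 2 * s)) with hQ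
  have hQm : Measurable Q := by fun_prop
  have hQf : ∫⁻ z, Q z < ∞ := lintegral_Q_lt_top _ (by omega) s _ _ hs (by positivity) (by positivity)
  set W : Eu (n + 1 + m) → ℝ≥0∞ := (Metric.ball 0 R).indicator
    fun x ↦ ENNReal.ofReal (pn n m x ^ (a + b)) with hW
  have hWm : Measurable W := Measurable.indicator (by fun_prop) measurableSet_ball
  have hWf : ∫⁻ x, W x < ∞ := by
    rw [hW, lintegral_indicator measurableSet_ball]
    exact lintegral_pn_rpow_lt_top n m _ R hab hR
  set c1 := ENNReal.ofReal (2 ^ |b|)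
  set c2 := ENNReal.ofReal (2 ^ |a|)
  have hdiff : ∀ x y, |u x - u y| ^ 2 ≤ min ((L : ℝ) ^ 2 * ‖x - y‖ ^ 2) ((2 * M) ^ 2) := by
    intro x y
    refine le_min ?_ (pow_le_pow_left₀ (abs_nonneg _) ?_ 2)
    · rw [← mul_pow]
      refine pow_le_pow_left₀ (abs_nonneg _) ?_ 2
      simpa [dist_eq_norm] using hL.dist_le_mul x y
    · have h1 := hM x
      have h2 := hM y
      rw [Real.norm_eq_abs] at h1 h2
      linarith [abs_sub (u x) (u y)]
  have near : ∀ x y, 0 < pn n m x → pn n m y ≤ 2 * pn n m x → pn n m x ≤ 2 * pn n m y →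
      ENNReal.ofReal (en n m s a b u x y) ≤ c1 * W x * Q (x - y) + c2 * W y * Q (x - y) := by
    intro x y hx h1 h2
    have hy : 0 < pn n m y := by linarith
    by_cases hxb : x ∈ Metric.ball (0 : Eu (n + 1 + m)) R
    · refine le_trans ?_ le_self_add
      rw [hW, indicator_of_mem hxb, ← ENNReal.ofReal_mul (by positivity), hQ,
        ← ENNReal.ofReal_mul (by positivity)]
      apply ENNReal.ofReal_le_ofReal
      unfold en hkern
      rw [Real.rpow_two]
      calc _ ≤ min ((L : ℝ) ^ 2 * ‖x - y‖ ^ 2) ((2 * M) ^ 2) *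
            (‖x - y‖ ^ (-((n + 1 + m : ℕ) : ℝ) - 2 * s) * pn n m x ^ a * (2 ^ |b| * pn n m x ^ b)) := by
            gcongr
            · exact hdiff x y
            · exact rpow_le_of_comparable _ _ b hx h1 h2
        _ = _ := by rw [Real.rpow_add hx]; ring
    by_cases hyb : y ∈ Metric.ball (0 : Eu (n + 1 + m)) R
    · refine le_trans ?_ le_add_self
      rw [hW, indicator_of_mem hyb, ← ENNReal.ofReal_mul (by positivity), hQ,
        ← ENNReal.ofReal_mul (by positivity)]
      apply ENNReal.ofReal_le_ofReal
      unfold en hkern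
      rw [Real.rpow_two]
      calc _ ≤ min ((L : ℝ) ^ 2 * ‖x - y‖ ^ 2) ((2 * M) ^ 2) *
            (‖x - y‖ ^ (-((n + 1 + m : ℕ) : ℝ) - 2 * s) * (2 ^ |a| * pn n m y ^ a) * pn n m y ^ b) := by
            gcongr
            · exact hdiff x y
            · exact rpow_le_of_comparable _ _ a hy h2 h1
        _ = _ := by rw [Real.rpow_add hy]; ring
    · unfold en
      rw [hball x hxb, hball y hyb]
      simp
  have hind := measurable_ind (S := Ioc 0 (1 / 2)) measurableSet_Ioc
  have hem := measurable_en n m s a b u hu.continuous.measurable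
  have hm1 : Measurable (Function.uncurry fun x y : Eu (n + 1 + m) ↦
      (invHull (Ioc 0 (1 / 2))).indicator (1 : ℝ → ℝ≥0∞) (pn n m y / pn n m x) *
        ENNReal.ofReal (en n m s a b u x y)) := by
    unfold Function.uncurry at hem ⊢
    fun_prop
  have hm2 : Measurable (Function.uncurry fun x y : Eu (n + 1 + m) ↦ c1 * W x * Q (x - y)) := by
    unfold Function.uncurry
    fun_prop
  have hm3 : Measurable (Function.uncurry fun x y : Eu (n + 1 + m) ↦ c2 * W y * Q (x - y)) := by
    unfold Function.uncurry
    fun_prop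
  have hae : ∀ᵐ x : Eu (n + 1 + m), 0 < pn n m x :=
    (ae_pn_ne n m 0).mono fun x hx ↦ lt_of_le_of_ne (pn_nonneg n m x) (Ne.symm hx)
  have hle : full n m (en n m s a b u) ≤ tr n m (Ioc 0 (1 / 2)) (en n m s a b u) +
      ((∫⁻ x, ∫⁻ y, c1 * W x * Q (x - y)) + ∫⁻ x, ∫⁻ y, c2 * W y * Q (x - y)) := by
    unfold full tr
    rw [← lintegral_add_left hm2.lintegral_prod_right, ← lintegral_add_left hm1.lintegral_prod_right]
    refine lintegral_mono_ae (hae.mono fun x hx ↦ ?_)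
    rw [← lintegral_add_left hm2.of_uncurry_left, ← lintegral_add_left hm1.of_uncurry_left]
    refine lintegral_mono_ae (hae.mono fun y hy ↦ ?_)
    by_cases hmem : pn n m y / pn n m x ∈ invHull (Ioc 0 (1 / 2))
    · rw [indicator_of_mem hmem, Pi.one_apply, one_mul]
      exact le_self_add
    · refine le_trans ?_ le_add_self
      have h3 : pn n m x ≤ 2 * pn n m y := by
        by_contra! hlt
        refine hmem (Or.inl ⟨by positivity, ?_⟩)
        rw [div_le_iff₀ hx]; linarith
      have h4 : pn n m y ≤ 2 * pn n m x := by
        by_contra! hlt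
        refine hmem (Or.inr ⟨by positivity, ?_⟩)
        rw [inv_div, div_le_iff₀ hy]; linarith
      exact near x y hx h4 h3
  refine hle.trans_lt (ENNReal.add_lt_top.2 ⟨?_, ENNReal.add_lt_top.2 ⟨?_, ?_⟩⟩)
  · exact tr_en_lt_top n m s a b hs.1 measurableSet_Ioc u hu.continuous.measurable hH
      (coefA_lt_top n s a b hs.1 ha hb (1 / 2) (by norm_num))
  · have e : ∀ x, ∫⁻ y, c1 * W x * Q (x - y) = c1 * W x * ∫⁻ z, Q z := by
      intro x
      rw [lintegral_const_mul _ (by fun_prop), lintegral_sub_left_eq_self Q x]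
    simp_rw [e]
    rw [lintegral_mul_const _ (by fun_prop), lintegral_const_mul _ hWm]
    exact ENNReal.mul_lt_top (ENNReal.mul_lt_top ENNReal.ofReal_lt_top hWf) hQf
  · rw [lintegral_lintegral_swap hm3.aemeasurable]
    have e : ∀ y, ∫⁻ x, c2 * W y * Q (x - y) = c2 * W y * ∫⁻ z, Q z := by
      intro y
      rw [lintegral_const_mul _ (by fun_prop), lintegral_sub_right_eq_self Q y]
    simp_rw [e]
    rw [lintegral_mul_const _ (by fun_prop), lintegral_const_mul _ hWm]
    exact ENNReal.mul_lt_top (ENNReal.mul_lt_top ENNReal.ofReal_lt_top hWf) hQf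

/-! ### From `[0, ∞]` to real integrals -/

/-- Finiteness makes the iterated Bochner integral agree with the one in `[0, ∞]`. -/
lemma full_toReal (n m : ℕ) (f : Eu (n + 1 + m) → Eu (n + 1 + m) → ℝ)
    (hf : Measurable (Function.uncurry f)) (hf0 : ∀ x y, 0 ≤ f x y) (hfin : full n m f < ∞) :
    ∫ x, ∫ y, f x y = (full n m f).toReal := by
  have h1 : ∀ x, ∫ y, f x y = (∫⁻ y, ENNReal.ofReal (f x y)).toReal := fun x ↦
    integral_eq_lintegral_of_nonneg_ae (ae_of_all _ (hf0 x)) hf.of_uncurry_left.aestronglyMeasurable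
  have hm : Measurable fun x ↦ ∫⁻ y, ENNReal.ofReal (f x y) :=
    Measurable.lintegral_prod_right (by unfold Function.uncurry at hf; fun_prop)
  simp_rw [h1]
  exact integral_toReal hm.aemeasurable (ae_lt_top hm hfin.ne)

lemma Phi_eq (n : ℕ) (s r : ℝ) (hr : r ∈ Ioo (0 : ℝ) 1) :
    Phi (n + 1) s 2 r = (Psi (n + 1) s r).toReal := by
  obtain ⟨h0, h1⟩ := hr
  unfold Phi Psi
  split_ifs with h
  · have h2 : 0 < 1 - r := by linarith
    rw [abs_of_pos h2, abs_of_pos (by linarith : 0 < 1 + r),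
      ENNReal.toReal_add ENNReal.ofReal_ne_top ENNReal.ofReal_ne_top,
      ENNReal.toReal_ofReal (by positivity), ENNReal.toReal_ofReal (by positivity)]
  · rw [ENNReal.toReal_mul, ENNReal.toReal_ofReal (sphereVol_pos _).le, integral_Icc_eq_integral_Ioo,
      integral_eq_lintegral_of_nonneg_ae]
    · refine (ae_restrict_mem measurableSet_Ioo).mono fun t ht ↦ ?_
      have h2 : 0 ≤ 1 - t ^ 2 := by nlinarith [ht.1, ht.2]
      have h3 : 0 ≤ 1 - 2 * t * r + r ^ 2 := by nlinarith [sq_nonneg (r - t)]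
      exact mul_nonneg (Real.rpow_nonneg h2 _) (Real.rpow_nonneg h3 _)
    · exact Measurable.aestronglyMeasurable (by fun_prop)

lemma C1_eq (n : ℕ) (s a b : ℝ) (hfin : coefC n s a b (Ioo 0 1) < ∞) :
    C1 (n + 1) s 2 a b = (coefC n s a b (Ioo 0 1)).toReal := by
  have hPm := measurable_Psi (n + 1) s
  have hm : Measurable fun r ↦ ENNReal.ofReal
      ((1 - r ^ (((n + 1 : ℕ) + a + b - 2 * s) / 2)) ^ 2 * Mfun s a b r) * Psi (n + 1) s r := by
    unfold Mfun; fun_prop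
  unfold C1 coefC at *
  rw [← integral_toReal hm.aemeasurable (ae_lt_top hm hfin.ne)]
  refine setIntegral_congr_fun measurableSet_Ioo fun r hr ↦ ?_
  have h0 : 0 < r := hr.1
  rw [Phi_eq n s r hr, ENNReal.toReal_mul, ENNReal.toReal_ofReal (by unfold Mfun; positivity),
    Real.rpow_two, sq_abs, mul_comm s 2]
  unfold Mfun
  ring

lemma cst_pos (k m : ℕ) (s : ℝ) (hs : 0 < s) : 0 < cst k m s := by
  unfold cst
  have h1 := Real.Gamma_pos_of_pos (s := ((k : ℝ) + s * 2) / 2) (by positivity)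
  have h2 := Real.Gamma_pos_of_pos (s := ((m : ℝ) + ((k : ℝ) + s * 2)) / 2) (by positivity)
  positivity

/-- The dimensional factor in `CC` is the constant from integrating out the tangential variables. -/
lemma CC_eq (n m : ℕ) (s a b : ℝ) :
    CC (n + 1 + m) (n + 1) s 2 a b = cst (n + 1) m s * C1 (n + 1) s 2 a b := by
  unfold CC cst
  congr 4
  · push_cast; ring
  · push_cast; ring

/-! ### The identity -/

/-- **Sharp weighted fractional Hardy identity for `p = 2`**: the Hardy difference equals the
ground-state-transformed energy exactly. -/
theorem weighted_fractional_hardy_identity_p_two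
    (d k : ℕ) (s α β : ℝ)
    (hd : 1 ≤ d) (hs : s ∈ Ioo (0 : ℝ) 1)
    (hk : 1 ≤ k) (hkd : k ≤ d)
    (hα : α ∈ Ioo (-(k : ℝ)) (2 * s)) (hβ : β ∈ Ioo (-(k : ℝ)) (2 * s))
    (hαβ : α + β ∈ Ioo (-(k : ℝ)) (2 * s))
    (u : EuclideanSpace ℝ (Fin d) → ℝ)
    (hu : ContDiff ℝ 1 u) (husupp : HasCompactSupport u)
    (hcase : 2 * s < k + α + β ∨
      (k + α + β < 2 * s ∧ ∀ x, pnorm d k x = 0 → x ∉ tsupport u))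
    (v : EuclideanSpace ℝ (Fin d) → ℝ)
    (hv : ∀ x, v x = pnorm d k x ^ (((k : ℝ) + α + β - 2 * s) / 2) * u x) :
    (∫ x, ∫ y, |u x - u y| ^ (2 : ℝ) * ‖x - y‖ ^ (-(d : ℝ) - 2 * s)
        * pnorm d k x ^ α * pnorm d k y ^ β)
      - CC d k s 2 α β * ∫ x, |u x| ^ (2 : ℝ) * pnorm d k x ^ (α + β - 2 * s) =
      ∫ x, ∫ y, |v x - v y| ^ (2 : ℝ) * ‖x - y‖ ^ (-(d : ℝ) - 2 * s)
        * pnorm d k x ^ (-(((k : ℝ) - α + β - 2 * s) / 2))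
        * pnorm d k y ^ (-(((k : ℝ) + α - β - 2 * s) / 2)) := by
  obtain ⟨n, rfl⟩ : ∃ n, k = n + 1 := ⟨k - 1, by omega⟩
  obtain ⟨m, rfl⟩ : ∃ m, d = n + 1 + m := ⟨d - (n + 1), by omega⟩
  have hPm := measurable_pn n m
  have hum := hu.continuous.measurable
  have hvm : Measurable v := by
    rw [show v = _ from funext hv]; fun_prop
  have hH : hardy n m s α β u < ∞ :=
    hardy_lt_top n m s α β u hu.continuous husupp hαβ.2 (hcase.imp id fun h ↦ h.2)
  have hE := full_en_lt_top n m s α β hs hα hβ hαβ.1 u hu husupp hH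
  have hid := full_identity n m s α β hs.1 hα hβ u v hum hH hv
  have hV := hE
  rw [hid, ENNReal.add_lt_top] at hV
  have eE := full_toReal n m _ (measurable_en n m s α β u hum) (en_nonneg n m s α β u) hE
  have eV := full_toReal n m _ (measurable_en n m s _ _ v hvm) (en_nonneg n m s _ _ v) hV.1
  have eH : ∫ x, |u x| ^ (2 : ℝ) * pn n m x ^ (α + β - 2 * s) = (hardy n m s α β u).toReal := by
    simp only [Real.rpow_two, sq_abs]
    refine integral_eq_lintegral_of_nonneg_ae (ae_of_all _ fun x ↦ ?_)
      (Measurable.aestronglyMeasurable (by fun_prop))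
    have := pn_nonneg n m x
    simp only [Pi.zero_apply]
    positivity
  have hCC : CC (n + 1 + m) (n + 1) s 2 α β * (hardy n m s α β u).toReal =
      (ENNReal.ofReal (cst (n + 1) m s) * coefC n s α β (Ioo 0 1) * hardy n m s α β u).toReal := by
    rcases eq_or_ne (hardy n m s α β u) 0 with h0 | h0
    · simp [h0]
    -- a nonzero Hardy integral forces the constant to be finite
    have hc : coefC n s α β (Ioo 0 1) < ∞ := by
      by_contra! htop
      have := hV.2
      rw [top_le_iff.1 htop, ENNReal.mul_top (by simpa using cst_pos (n + 1) m s hs.1),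
        ENNReal.top_mul h0] at this
      exact lt_irrefl _ this
    rw [CC_eq, C1_eq n s α β hc, ENNReal.toReal_mul, ENNReal.toReal_mul,
      ENNReal.toReal_ofReal (cst_pos (n + 1) m s hs.1).le]
  have hreal := congrArg ENNReal.toReal hid
  rw [ENNReal.toReal_add hV.1.ne hV.2.ne, ← eE, ← eV] at hreal
  unfold en hkern at hreal
  simp only [← mul_assoc] at hreal
  rw [eH, hCC, sub_eq_iff_eq_add]
  exact hreal
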